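/- arXiv:0705.3424 — 2 statements merged into one kernel-verified Lean document; each statement's English description precedes it below -/
import Mathlib

section
/- Suppose G is a countably infinite amenable group and the action of G on X is free with respect to μ, meaning that for every s ∈ G ∖ {e} the set {x ∈ X : sx = x} has μ-measure zero. Then for every finite Borel cover 𝒰 of X one has h_μ⁺(𝒰) ≤ h̲_{c,μ}(𝒰). -/
open MeasureTheory Set
open scoped Classical ENNReal

/-- `F` is a nonempty `(K,δ)`-invariant finite subset of the group `G`. -/
def FolnerInv {G : Type*} [Group G] (K : Finset G) (δ : ℝ) (F : Finset G) : Prop :=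
  F.Nonempty ∧
    (1 - δ) * (F.card : ℝ) ≤ (((F : Set G)) ∩ {s : G | ∀ g ∈ K, g * s ∈ F}).ncard

/-- The Følner characterisation of amenability for a discrete group `G`. -/
def FolnerAmenable (G : Type*) [Group G] : Prop :=
  ∀ (K : Finset G) (δ : ℝ), 0 < δ → ∃ F : Finset G, FolnerInv K δ F

/-- The limit supremum of `ψ F / |F|` as `F` becomes more and more invariant. -/
noncomputable def invLimsup {G : Type*} [Group G] (ψ : Finset G → ℝ) : ℝ :=
  ⨅ (K : Finset G) (δ : {d : ℝ // 0 < d}),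
    sSup ((fun F : Finset G => ψ F / (F.card : ℝ)) '' {F : Finset G | FolnerInv K δ.1 F})

/-- The limit infimum of `ψ F / |F|` as `F` becomes more and more invariant. -/
noncomputable def invLiminf {G : Type*} [Group G] (ψ : Finset G → ℝ) : ℝ :=
  ⨆ (K : Finset G) (δ : {d : ℝ // 0 < d}),
    sInf ((fun F : Finset G => ψ F / (F.card : ℝ)) '' {F : Finset G | FolnerInv K δ.1 F})

/-- `J ⊆ G` is an independence set for the tuple `A` of subsets of `X` relative to the
map `D : G → Set X`. -/
def IndepRel {G X : Type*} [Group G] [MulAction G X] {k : ℕ} (A : Fin k → Set X)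
    (D : G → Set X) (J : Set G) : Prop :=
  ∀ F : Finset G, (F : Set G) ⊆ J → F.Nonempty → ∀ σ : G → Fin k,
    (⋂ s ∈ F, (D s ∩ (fun x => s • x) ⁻¹' A (σ s))).Nonempty

/-- `J ⊆ G` is an independence set for the tuple `A` relative to the subset `D ⊆ X`. -/
def IndepSet {G X : Type*} [Group G] [MulAction G X] {k : ℕ} (A : Fin k → Set X)
    (D : Set X) (J : Set G) : Prop :=
  IndepRel A (fun _ => D) J

/-- The maximum of `|F ∩ J|` over independence sets `J` for `A` relative to `D`. -/
noncomputable def maxIndep {G X : Type*} [Group G] [MulAction G X] {k : ℕ}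
    (A : Fin k → Set X) (D : G → Set X) (F : Finset G) : ℕ :=
  sSup {m : ℕ | ∃ J : Set G, IndepRel A D J ∧ m = (((F : Set G)) ∩ J).ncard}

/-- `φ_{A,δ}(F)`: the minimum over Borel sets `D` with `μ(D) ≥ 1 - δ` of the maximum
of `|F ∩ J|` over independence sets `J` for `A` relative to `D`. -/
noncomputable def phiConst {G X : Type*} [Group G] [MulAction G X] [MeasurableSpace X]
    (μ : Measure X) {k : ℕ} (A : Fin k → Set X) (δ : ℝ) (F : Finset G) : ℕ :=
  sInf {m : ℕ | ∃ D : Set X, MeasurableSet D ∧ 1 - δ ≤ (μ D).toReal ∧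
    m = maxIndep A (fun _ : G => D) F}

/-- `φ'_{A,δ}(F)`: as `phiConst` but with maps `D : G → Set X` with `μ(D s) ≥ 1 - δ`
for all `s`. -/
noncomputable def phiMap {G X : Type*} [Group G] [MulAction G X] [MeasurableSpace X]
    (μ : Measure X) {k : ℕ} (A : Fin k → Set X) (δ : ℝ) (F : Finset G) : ℕ :=
  sInf {m : ℕ | ∃ D : G → Set X, (∀ s, MeasurableSet (D s)) ∧
    (∀ s, 1 - δ ≤ (μ (D s)).toReal) ∧ m = maxIndep A D F}

/-- The upper `μ`-independence density `Ī_μ(A)` of the tuple `A`. -/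
noncomputable def upperIndepDens (G : Type*) {X : Type*} [Group G] [MulAction G X]
    [MeasurableSpace X] (μ : Measure X) {k : ℕ} (A : Fin k → Set X) : ℝ :=
  ⨆ δ : {d : ℝ // 0 < d}, invLimsup (fun F : Finset G => (phiConst μ A δ.1 F : ℝ))

/-- The lower `μ`-independence density `I̲_μ(A)` of the tuple `A`. -/
noncomputable def lowerIndepDens (G : Type*) {X : Type*} [Group G] [MulAction G X]
    [MeasurableSpace X] (μ : Measure X) {k : ℕ} (A : Fin k → Set X) : ℝ :=
  ⨆ δ : {d : ℝ // 0 < d}, invLiminf (fun F : Finset G => (phiConst μ A δ.1 F : ℝ))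

/-- The measure `μ` is invariant under the action of `G`. -/
def InvariantMeasure (G : Type*) {X : Type*} [Group G] [MulAction G X] [MeasurableSpace X]
    (μ : Measure X) : Prop :=
  ∀ (s : G) (B : Set X), MeasurableSet B → μ ((fun x => s • x) ⁻¹' B) = μ B

/-- The entropy `H_μ(𝒫^F)` of the join `⋁_{s ∈ F} s⁻¹𝒫` of the finite partition `P`. -/
noncomputable def HJoin {G X : Type*} [Group G] [MulAction G X] [MeasurableSpace X]
    (μ : Measure X) {k : ℕ} (P : Fin k → Set X) (F : Finset G) : ℝ :=
  ∑ f : ↥F → Fin k,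
    Real.negMulLog (μ (⋂ s : ↥F, (fun x => (s : G) • x) ⁻¹' P (f s))).toReal

/-- `P` is a finite measurable partition of `X` (members may be empty). -/
def IsMeasPartition {X : Type*} [MeasurableSpace X] {k : ℕ} (P : Fin k → Set X) : Prop :=
  (∀ i, MeasurableSet (P i)) ∧ (Pairwise fun i j => Disjoint (P i) (P j)) ∧
    (⋃ i, P i) = Set.univ

/-- `x` is a (topological) IE-tuple for the action of `G` on `X`. -/
def IsIETuple (G : Type*) {X : Type*} [Group G] [TopologicalSpace X] [MulAction G X]
    {k : ℕ} (x : Fin k → X) : Prop :=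
  ∀ U : Fin k → Set X, (∀ i, U i ∈ nhds (x i)) →
    ∃ d : ℝ, 0 < d ∧ ∀ (K : Finset G) (δ : ℝ), 0 < δ →
      ∃ (F : Finset G) (J : Set G), FolnerInv K δ F ∧ IndepSet U (Set.univ : Set X) J ∧
        d * (F.card : ℝ) ≤ (((F : Set G)) ∩ J).ncard

/-- `x` is a `μ`-IE-tuple. -/
def IsMuIETuple (G : Type*) {X : Type*} [Group G] [TopologicalSpace X] [MulAction G X]
    [MeasurableSpace X] (μ : Measure X) {k : ℕ} (x : Fin k → X) : Prop :=
  ∀ U : Fin k → Set X, (∀ i, U i ∈ nhds (x i)) → 0 < upperIndepDens G μ U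

/-- The minimal number of members of the join cover `𝒰^F` needed to cover `D`. -/
noncomputable def coverNumJoin {G X : Type*} [Group G] [MulAction G X] {m : ℕ}
    (U : Fin m → Set X) (F : Finset G) (D : Set X) : ℕ :=
  sInf {n : ℕ | ∃ t : Finset (↥F → Fin m), t.card = n ∧
    D ⊆ ⋃ f ∈ t, ⋂ s : ↥F, (fun x => (s : G) • x) ⁻¹' U (f s)}

/-- `N_δ(𝒰^F)`: the minimum of `N_D(𝒰^F)` over Borel sets `D` with `μ(D) ≥ 1 − δ`. -/
noncomputable def NdeltaJoin {G X : Type*} [Group G] [MulAction G X] [MeasurableSpace X]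
    (μ : Measure X) {m : ℕ} (U : Fin m → Set X) (δ : ℝ) (F : Finset G) : ℕ :=
  sInf {n : ℕ | ∃ D : Set X, MeasurableSet D ∧ 1 - δ ≤ (μ D).toReal ∧
    n = coverNumJoin U F D}

/-- `h̲_{c,μ}(𝒰) = sup_{δ>0}` liminf of `(1/|F|) ln N_δ(𝒰^F)` as `F` becomes more and
more invariant. -/
noncomputable def hLowerC (G : Type*) {X : Type*} [Group G] [MulAction G X]
    [MeasurableSpace X] (μ : Measure X) {m : ℕ} (U : Fin m → Set X) : ℝ :=
  ⨆ δ : {d : ℝ // 0 < d},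
    invLiminf (fun F : Finset G => Real.log (NdeltaJoin μ U δ.1 F))

/-- `h_μ⁺(𝒰)`: the infimum of `h_μ(𝒫)` over finite Borel partitions `𝒫` refining `𝒰`. -/
noncomputable def hPlus (G : Type*) {X : Type*} [Group G] [MulAction G X]
    [MeasurableSpace X] (μ : Measure X) {m : ℕ} (U : Fin m → Set X) : ℝ :=
  sInf {h : ℝ | ∃ (r : ℕ) (P : Fin r → Set X), IsMeasPartition P ∧
    (∀ a, ∃ i, P a ⊆ U i) ∧ h = invLimsup (fun F : Finset G => HJoin μ P F)}

/-!
Given `ε` and `δ`, there are arbitrarily invariant windows `F` for which at most `exp ((h + ε) |F|)`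
members of `𝒰 ^ F` cover all but measure `δ` of the space; choosing them amounts to naming, for most
points, a word of length `|F|` compatible with the itinerary through `𝒰`. An Ornstein–Weiss
quasi-tiling places such windows along the orbits: counting how often a point is hit shows that the
measures of the sets of centres, weighted by the sizes of the windows, add up to at most
`1 / (1 - ε)`. Writing the chosen names on the tiles and an arbitrary admissible symbol elsewhere
yields a measurable partition finer than `𝒰`, whose entropy is at most the cost of describing the
tiles, `h` up to an error vanishing with `ε`.

The measurable selections require points to be separated by countably many sets, which `X` need not
satisfy. The argument is therefore run on the shift factor of all itineraries through `𝒰`. Points of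
this factor can have nontrivial stabilizers, which would let a tile be counted several times at the
same point; weighting each point by `1 / |Stab|` compensates for this multiplicity.
-/

namespace LocalEntropy

open Filter MulAction
open scoped Pointwise NNReal Finset Topology

section Entropy

variable {Y : Type*} [MeasurableSpace Y] {α β : Type*}

/-- The Shannon entropy of the random variable `f`, which takes finitely many values. -/
noncomputable def entropy (μ : Measure Y) [Fintype β] (f : Y → β) : ℝ :=
  ∑ b, Real.negMulLog (μ.real (f ⁻¹' {b}))

lemma sum_negMulLog_le_sum_mul_neg_log [Fintype β] {p r : β → ℝ} (hp : ∀ b, 0 ≤ p b)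
    (hr : ∀ b, 0 ≤ r b) (hrp : ∑ b, r b ≤ ∑ b, p b) (hpr : ∀ b, 0 < p b → 0 < r b) :
    ∑ b, Real.negMulLog (p b) ≤ ∑ b, p b * -Real.log (r b) := by
  have key (b : β) : Real.negMulLog (p b) - p b * -Real.log (r b) ≤ r b - p b := by
    rcases (hp b).eq_or_lt with h | h
    · simp [← h, hr b]
    · have hlog := Real.log_le_sub_one_of_pos (div_pos (hpr b h) h)
      rw [Real.log_div (hpr b h).ne' h.ne'] at hlog
      have hmul : p b * (r b / p b - 1) = r b - p b := by field_simp
      rw [Real.negMulLog]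
      linarith [mul_le_mul_of_nonneg_left hlog h.le]
  have hsum := Finset.sum_le_sum fun b (_ : b ∈ Finset.univ) => key b
  rw [Finset.sum_sub_distrib, Finset.sum_sub_distrib] at hsum
  linarith

lemma negMulLog_sum_le {ι : Type*} (s : Finset ι) {p : ι → ℝ} (hp : ∀ i, 0 ≤ p i) :
    Real.negMulLog (∑ i ∈ s, p i) ≤ ∑ i ∈ s, Real.negMulLog (p i) := by
  rw [Real.negMulLog, ← neg_mul_eq_neg_mul, Finset.sum_mul, ← Finset.sum_neg_distrib]
  refine Finset.sum_le_sum fun i hi => ?_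
  rcases (hp i).eq_or_lt with h | h
  · simp [← h]
  · rw [Real.negMulLog, ← neg_mul_eq_neg_mul]
    exact neg_le_neg (mul_le_mul_of_nonneg_left
      (Real.log_le_log h (Finset.single_le_sum (fun j _ => hp j) hi)) h.le)

variable [MeasurableSpace α] [MeasurableSingletonClass α]

lemma integrable_comp_of_finite [Finite α] (μ : Measure Y) [IsFiniteMeasure μ] {f : Y → α}
    (hf : Measurable f) (φ : α → ℝ) : Integrable (fun y => φ (f y)) μ :=
  (Integrable.of_finite (f := φ)).comp_measurable hf

lemma integral_comp_eq_sum [Fintype α] (μ : Measure Y) [IsFiniteMeasure μ] {f : Y → α}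
    (hf : Measurable f) (φ : α → ℝ) :
    ∫ y, φ (f y) ∂μ = ∑ a, μ.real (f ⁻¹' {a}) * φ a := by
  rw [← integral_map hf.aemeasurable Measurable.of_discrete.aestronglyMeasurable,
    integral_fintype .of_finite]
  simp only [map_measureReal_apply hf (measurableSet_singleton _), smul_eq_mul]

lemma entropy_le_integral [Fintype α] (μ : Measure Y) [IsProbabilityMeasure μ] {f : Y → α}
    (hf : Measurable f) {r : α → ℝ} (hr : ∀ a, 0 ≤ r a) (hr1 : ∑ a, r a ≤ 1)
    (hpos : ∀ y, 0 < r (f y)) : entropy μ f ≤ ∫ y, -Real.log (r (f y)) ∂μ := by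
  rw [integral_comp_eq_sum μ hf fun a => -Real.log (r a)]
  refine sum_negMulLog_le_sum_mul_neg_log (fun _ => measureReal_nonneg) hr ?_ fun a ha => ?_
  · have hsum := integral_comp_eq_sum μ hf fun _ => 1
    simp only [integral_const, probReal_univ, mul_one, smul_eq_mul] at hsum
    rwa [← hsum]
  · obtain ⟨y, rfl⟩ : (f ⁻¹' {a}).Nonempty :=
      nonempty_of_measureReal_ne_zero ha.ne'
    exact hpos y

lemma entropy_comp_le [Fintype α] [Fintype β] (μ : Measure Y) [IsFiniteMeasure μ] {f : Y → α}
    (hf : Measurable f) (φ : α → β) : entropy μ (fun y => φ (f y)) ≤ entropy μ f := by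
  have hfib (b : β) : μ.real ((fun y => φ (f y)) ⁻¹' {b}) =
      ∑ a with φ a = b, μ.real (f ⁻¹' {a}) := by
    rw [sum_measureReal_preimage_singleton _ fun a _ => hf (measurableSet_singleton a)]
    congr 1
    ext y
    simp
  simp only [entropy, hfib]
  calc ∑ b, Real.negMulLog (∑ a with φ a = b, μ.real (f ⁻¹' {a}))
      ≤ ∑ b, ∑ a with φ a = b, Real.negMulLog (μ.real (f ⁻¹' {a})) :=
        Finset.sum_le_sum fun b _ => negMulLog_sum_le _ fun _ => measureReal_nonneg
    _ = ∑ a, Real.negMulLog (μ.real (f ⁻¹' {a})) := Finset.sum_fiberwise ..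

lemma exists_measurable_choice [Finite β] [MeasurableSpace (Option β)] {A : β → Set Y}
    (hA : ∀ b, MeasurableSet (A b)) :
    ∃ f : Y → Option β, Measurable f ∧ (∀ y, f y = none ↔ ∀ b, y ∉ A b) ∧
      ∀ y b, f y = some b → y ∈ A b := by
  let choice (S : β → Prop) : Option β := if h : ∃ b, S b then some h.choose else none
  have hmem : Measurable fun y b => y ∈ A b :=
    measurable_pi_iff.2 fun b => measurableSet_setOfPred.1 (hA b)
  refine ⟨fun y => choice fun b => y ∈ A b,
    (Measurable.of_discrete (f := choice)).comp hmem, fun y => ?_, fun y b hb => ?_⟩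
  · by_cases h : ∃ b, y ∈ A b
    · simp [choice, h]
    · simpa only [choice, dif_neg h, true_iff, not_exists] using h
  · by_cases h : ∃ b, y ∈ A b
    · simp only [choice, dif_pos h, Option.some.injEq] at hb
      exact hb ▸ h.choose_spec
    · simp [choice, h] at hb

end Entropy

section Coding

variable {Y : Type*} [MeasurableSpace Y] {α ι κ lab : Type*} [Fintype α] [Fintype ι] [Fintype κ]
  [Fintype lab]

lemma sum_mk_div_card_class (r : Setoid ι) (c : Quotient r → ℝ) :
    ∑ s, c (Quotient.mk r s) / #{s' | r s' s} = ∑ k, c k := by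
  simp only [← Quotient.eq (r := r)]
  rw [Finset.sum_comp (fun k => c k / #{s' | Quotient.mk r s' = k}) (Quotient.mk r),
    Finset.image_univ_of_surjective Quotient.mk_surjective]
  refine Finset.sum_congr rfl fun k _ => ?_
  have hpos : (#{s' | Quotient.mk r s' = k} : ℝ) ≠ 0 :=
    Nat.cast_ne_zero.2 (Finset.card_pos.2 ⟨k.out, by simp⟩).ne'
  rw [nsmul_eq_mul, mul_div_cancel₀ _ hpos]

lemma sum_prod_le_one {q : α → ℝ} (hq : ∀ a, 0 < q a) (hq1 : ∑ a, q a ≤ 1) :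
    ∑ v : κ → α, ∏ k, q (v k) ≤ 1 := by
  rw [← Fintype.piFinset_univ, ← Finset.prod_univ_sum fun _ => Finset.univ]
  exact Finset.prod_le_one (fun _ _ => Finset.sum_nonneg fun a _ => (hq a).le) fun _ _ => hq1

lemma sum_sigma_card_inv_mul_prod_le_one [Nonempty lab] {κ : lab → Type*}
    [∀ a, Fintype (κ a)] {q : α → ℝ} (hq : ∀ a, 0 < q a) (hq1 : ∑ a, q a ≤ 1) :
    ∑ c : Σ a, κ a → α, (Fintype.card lab : ℝ)⁻¹ * ∏ k, q (c.2 k) ≤ 1 := by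
  rw [← Finset.mul_sum, Fintype.sum_sigma]
  calc (Fintype.card lab : ℝ)⁻¹ * ∑ a, ∑ v : κ a → α, ∏ k, q (v k)
      ≤ (Fintype.card lab : ℝ)⁻¹ * ∑ _a : lab, 1 := by
        gcongr
        exact sum_prod_le_one hq hq1
    _ = 1 := by simp [Fintype.card_ne_zero]

variable [DecidableEq ι] [MeasurableSpace α] [MeasurableSingletonClass α] [MeasurableSpace lab]
  [MeasurableSingletonClass lab]

lemma entropy_le_of_transversal (μ : Measure Y) [IsProbabilityMeasure μ] {A : Y → lab}
    (hA : Measurable A) {ω : Y → ι → α} (hω : Measurable ω) {κ : lab → Type*}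
    [∀ a, Fintype (κ a)] (mk : ∀ a, ι → κ a) (out : ∀ a, κ a → ι)
    (hout : ∀ y s, ω y (out (A y) (mk (A y) s)) = ω y s) {q : α → ℝ} (hq : ∀ a, 0 < q a)
    (hq1 : ∑ a, q a ≤ 1) :
    entropy μ ω ≤ Real.log (Fintype.card lab) +
      ∫ y, ∑ k, -Real.log (q (ω y (out (A y) k))) ∂μ := by
  have : Nonempty lab := μ.nonempty_of_neZero.map A
  have hcard : (0 : ℝ) < Fintype.card lab := by exact_mod_cast Fintype.card_pos
  let _ : MeasurableSpace (Σ a, κ a → α) := ⊤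
  let encode (p : lab × (ι → α)) : Σ a, κ a → α := ⟨p.1, fun k => p.2 (out p.1 k)⟩
  let decode (c : Σ a, κ a → α) : ι → α := fun s => c.2 (mk c.1 s)
  let weight (c : Σ a, κ a → α) : ℝ := (Fintype.card lab : ℝ)⁻¹ * ∏ k, q (c.2 k)
  have hprod (c : Σ a, κ a → α) : 0 < ∏ k, q (c.2 k) := Finset.prod_pos fun k _ => hq _
  have hweight (c : Σ a, κ a → α) : 0 < weight c := mul_pos (inv_pos.2 hcard) (hprod c)
  have hdecode (y : Y) : decode (encode (A y, ω y)) = ω y := funext fun s => hout y s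
  have hpair : Measurable fun y => (A y, ω y) := hA.prodMk hω
  have hcode : Measurable fun y => encode (A y, ω y) :=
    (Measurable.of_discrete (f := encode)).comp hpair
  have hlog (y : Y) : -Real.log (weight (encode (A y, ω y))) = Real.log (Fintype.card lab) +
      ∑ k, -Real.log (q (ω y (out (A y) k))) := by
    rw [Real.log_mul (inv_pos.2 hcard).ne' (hprod _).ne', Real.log_inv,
      Real.log_prod fun k _ => (hq _).ne', neg_add, neg_neg, Finset.sum_neg_distrib]
  calc entropy μ ω = entropy μ fun y => decode (encode (A y, ω y)) := by simp only [hdecode]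
    _ ≤ entropy μ fun y => encode (A y, ω y) := entropy_comp_le μ hcode decode
    _ ≤ ∫ y, -Real.log (weight (encode (A y, ω y))) ∂μ :=
      entropy_le_integral μ hcode (fun c => (hweight c).le)
        (sum_sigma_card_inv_mul_prod_le_one hq hq1) fun y => hweight _
    _ = _ := by
      simp only [hlog]
      rw [integral_add (integrable_const _), integral_const, probReal_univ, one_smul]
      exact integrable_comp_of_finite μ hpair fun p => ∑ k, -Real.log (q (p.2 (out p.1 k)))

lemma entropy_le_of_label (μ : Measure Y) [IsProbabilityMeasure μ] {A : Y → lab}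
    (hA : Measurable A) {ω : Y → ι → α} (hω : Measurable ω) (r : lab → Setoid ι)
    (hr : ∀ y s s', r (A y) s s' → ω y s = ω y s') {q : α → ℝ} (hq : ∀ a, 0 < q a)
    (hq1 : ∑ a, q a ≤ 1) :
    entropy μ ω ≤ Real.log (Fintype.card lab) +
      ∫ y, ∑ s, -Real.log (q (ω y s)) / #{s' | r (A y) s' s} ∂μ := by
  have hout (y : Y) (s : ι) : ω y (Quotient.mk (r (A y)) s).out = ω y s :=
    hr y _ s (Quotient.mk_out s)
  refine (entropy_le_of_transversal μ hA hω (fun a => Quotient.mk (r a))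
    (fun _ => Quotient.out) hout hq hq1).trans_eq ?_
  simp only [← fun y => sum_mk_div_card_class (r (A y)) fun k => -Real.log (q (ω y k.out)), hout]

end Coding

section Folner

variable {G : Type*} [Group G]

/-- The filter along which a finite subset of `G` becomes more and more invariant. -/
def folner (G : Type*) [Group G] : Filter (Finset G) :=
  ⨅ (p : Finset G × ℝ) (_ : 0 < p.2), 𝓟 {F | FolnerInv p.1 p.2 F}

/-- The inner `K`-boundary of `F`: the elements of `F` which `K` does not keep inside `F`. -/
noncomputable def innerBoundary (K F : Finset G) : Finset G := {s ∈ F | ¬ ∀ g ∈ K, g * s ∈ F}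

lemma innerBoundary_subset (K F : Finset G) : innerBoundary K F ⊆ F := Finset.filter_subset _ F

lemma innerBoundary_mono {K K' : Finset G} (hK : K ⊆ K') (F : Finset G) :
    innerBoundary K F ⊆ innerBoundary K' F :=
  Finset.monotone_filter_right F fun _ _ h h' => h fun g hg => h' g (hK hg)

lemma folnerInv_iff {K F : Finset G} {δ : ℝ} :
    FolnerInv K δ F ↔ F.Nonempty ∧ (#(innerBoundary K F) : ℝ) ≤ δ * #F := by
  have hncard : ((F : Set G) ∩ {s | ∀ g ∈ K, g * s ∈ F}).ncard =
      #{s ∈ F | ∀ g ∈ K, g * s ∈ F} := by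
    rw [← ncard_coe_finset, Finset.coe_filter]
    rfl
  have hsum : (#{s ∈ F | ∀ g ∈ K, g * s ∈ F} : ℝ) + #(innerBoundary K F) = #F := by
    exact_mod_cast Finset.card_filter_add_card_filter_not (s := F) fun s => ∀ g ∈ K, g * s ∈ F
  rw [FolnerInv, hncard]
  refine and_congr_right fun _ => ?_
  constructor <;> intro h <;> linarith

lemma folnerInv_mono {K K' F : Finset G} {δ δ' : ℝ} (hK : K' ⊆ K) (hδ : δ ≤ δ')
    (h : FolnerInv K δ F) : FolnerInv K' δ' F := by
  rw [folnerInv_iff] at h ⊢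
  refine ⟨h.1, ?_⟩
  calc (#(innerBoundary K' F) : ℝ) ≤ #(innerBoundary K F) := by
        gcongr
        exact innerBoundary_mono hK F
    _ ≤ δ * #F := h.2
    _ ≤ δ' * #F := by gcongr

lemma hasBasis_folner :
    (folner G).HasBasis (fun p : Finset G × ℝ => 0 < p.2) fun p => {F | FolnerInv p.1 p.2 F} :=
  hasBasis_biInf_principal' (fun p hp q hq => ⟨(p.1 ∪ q.1, min p.2 q.2), lt_min hp hq,
    fun _ => folnerInv_mono Finset.subset_union_left (min_le_left _ _),
    fun _ => folnerInv_mono Finset.subset_union_right (min_le_right _ _)⟩) ⟨(∅, 1), one_pos⟩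

lemma neBot_folner (hG : FolnerAmenable G) : (folner G).NeBot :=
  hasBasis_folner.neBot_iff.2 fun {p} hp => hG p.1 p.2 hp

lemma eventually_folnerInv (K : Finset G) {δ : ℝ} (hδ : 0 < δ) :
    ∀ᶠ F in folner G, FolnerInv K δ F :=
  hasBasis_folner.mem_of_mem (i := (K, δ)) hδ

lemma eventually_card_innerBoundary_le (K : Finset G) {δ : ℝ} (hδ : 0 < δ) :
    ∀ᶠ F in folner G, (#(innerBoundary K F) : ℝ) ≤ δ * #F :=
  (eventually_folnerInv K hδ).mono fun _ hF => (folnerInv_iff.1 hF).2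

lemma eventually_nonempty_folner : ∀ᶠ F in folner G, F.Nonempty :=
  (eventually_folnerInv ∅ one_pos).mono fun _ hF => hF.1

lemma mul_sdiff_subset (K F : Finset G) : (K * F) \ F ⊆ K * innerBoundary K F := by
  intro x hx
  rw [Finset.mem_sdiff, Finset.mem_mul] at hx
  obtain ⟨⟨k, hk, s, hs, rfl⟩, hks⟩ := hx
  exact Finset.mul_mem_mul hk (Finset.mem_filter.2 ⟨hs, fun h => hks (h k hk)⟩)

lemma eventually_card_mul_sdiff_le (K : Finset G) {δ : ℝ} (hδ : 0 < δ) :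
    ∀ᶠ F in folner G, (#((K * F) \ F) : ℝ) ≤ δ * #F := by
  have hpos : (0 : ℝ) < #K + 1 := by positivity
  filter_upwards [eventually_card_innerBoundary_le K (div_pos hδ hpos)] with F hF
  calc (#((K * F) \ F) : ℝ) ≤ #K * #(innerBoundary K F) := by
        exact_mod_cast (Finset.card_le_card (mul_sdiff_subset K F)).trans Finset.card_mul_le
    _ ≤ #K * (δ / (#K + 1) * #F) := by gcongr
    _ = #K / (#K + 1) * (δ * #F) := by ring
    _ ≤ δ * #F := mul_le_of_le_one_left (by positivity) ((div_le_one hpos).2 (by linarith))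

lemma eventually_card_mul_le (K : Finset G) {δ : ℝ} (hδ : 0 < δ) :
    ∀ᶠ F in folner G, (#(K * F) : ℝ) ≤ (1 + δ) * #F := by
  filter_upwards [eventually_card_mul_sdiff_le K hδ] with F hF
  have hcard : (#(K * F) : ℝ) ≤ #((K * F) \ F) + #F := by
    exact_mod_cast tsub_le_iff_right.1 (Finset.le_card_sdiff F (K * F))
  linarith

lemma innerBoundary_mul_subset {K K₁ F : Finset G} (hK₁ : 1 ∈ K₁) :
    innerBoundary K (K₁ * F) ⊆ innerBoundary K F ∪ ((K₁ * F) \ F) := by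
  intro s hs
  rw [innerBoundary, Finset.mem_filter] at hs
  by_cases hsF : s ∈ F
  · refine Finset.mem_union_left _ (Finset.mem_filter.2 ⟨hsF, fun h => hs.2 fun g hg => ?_⟩)
    exact Finset.subset_mul_right F hK₁ (h g hg)
  · exact Finset.mem_union_right _ (Finset.mem_sdiff.2 ⟨hs.1, hsF⟩)

lemma tendsto_mul_left_folner {K₁ : Finset G} (hK₁ : 1 ∈ K₁) :
    Tendsto (K₁ * ·) (folner G) (folner G) := by
  refine hasBasis_folner.tendsto_right_iff.2 ?_
  rintro ⟨K, δ⟩ (hδ : 0 < δ)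
  filter_upwards [eventually_card_innerBoundary_le K (half_pos hδ),
    eventually_card_mul_sdiff_le K₁ (half_pos hδ), eventually_nonempty_folner] with F hK hK₁F hF
  have hsub : F ⊆ K₁ * F := Finset.subset_mul_right F hK₁
  refine folnerInv_iff.2 ⟨hF.mono hsub, ?_⟩
  calc (#(innerBoundary K (K₁ * F)) : ℝ) ≤ #(innerBoundary K F) + #((K₁ * F) \ F) := by
        exact_mod_cast (Finset.card_le_card (innerBoundary_mul_subset hK₁)).trans
          (Finset.card_union_le _ _)
    _ ≤ δ * #F := by linarith
    _ ≤ δ * #(K₁ * F) := by gcongr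

lemma card_le_card_of_innerBoundary_ssubset {K F : Finset G} (h : innerBoundary K F ⊂ F) :
    #K ≤ #F := by
  obtain ⟨s, hs, hsF⟩ := Finset.exists_of_ssubset h
  have hstay : ∀ g ∈ K, g * s ∈ F := by simpa [innerBoundary, hs] using hsF
  exact Finset.card_le_card_of_injOn (· * s) hstay (mul_left_injective s).injOn

lemma tendsto_card_folner [Infinite G] : Tendsto Finset.card (folner G) atTop := by
  refine tendsto_atTop.2 fun n => ?_
  obtain ⟨K, rfl⟩ := Infinite.exists_subset_card_eq G n
  filter_upwards [eventually_card_innerBoundary_le K one_half_pos, eventually_nonempty_folner]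
    with F hF hne
  refine card_le_card_of_innerBoundary_ssubset
    ((innerBoundary_subset K F).ssubset_of_ne fun h => ?_)
  have hpos : (0 : ℝ) < #F := by exact_mod_cast hne.card_pos
  have heq : #(innerBoundary K F) = #F := congrArg _ h
  rw [heq] at hF
  linarith

end Folner

section StabilizerWeight

variable (G : Type*) {Y : Type*} [Group G] [MulAction G Y]

/-- The inverse of the cardinality of the stabilizer of `x`. When the stabilizer is infinite, the
convention `Nat.card = 0` makes this `0`, which is the wanted value. -/
noncomputable def stabWeight (x : Y) : ℝ≥0 := (Nat.card (stabilizer G x) : ℝ≥0)⁻¹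

variable {G}

/-- The inverse of the number of elements of `K` which fix `x`: the approximation of
`stabWeight G x` visible from the finite set `K`. -/
noncomputable def localWeight (K : Finset G) (x : Y) : ℝ≥0 := (#{u ∈ K | u • x = x} : ℝ≥0)⁻¹

lemma localWeight_le_one (K : Finset G) (x : Y) : localWeight K x ≤ 1 :=
  Nat.cast_inv_le_one _

lemma stabWeight_smul (g : G) (x : Y) : stabWeight G (g • x) = stabWeight G x := by
  rw [stabWeight, stabWeight,
    Nat.card_congr (stabilizerEquivStabilizer (rfl : g • x = g • x)).toEquiv]

lemma stabWeight_mul_card_le_one {M : Finset G} {x : Y} (hM : ∀ u ∈ M, u • x = x) :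
    stabWeight G x * #M ≤ 1 := by
  rcases finite_or_infinite (stabilizer G x) with hfin | hinf
  · have hcard : #M ≤ Nat.card (stabilizer G x) := by
      rw [← ncard_coe_finset]
      exact ncard_le_ncard hM hfin
    rw [stabWeight, inv_mul_le_iff₀ (by exact_mod_cast Nat.card_pos), mul_one]
    exact_mod_cast hcard
  · rw [stabWeight, Nat.card_eq_zero_of_infinite, Nat.cast_zero, inv_zero, zero_mul]
    exact zero_le_one

lemma one_le_stabWeight_mul_card {M : Finset G} {x : Y} (hM : ∀ u : G, u • x = x → u ∈ M) :
    1 ≤ stabWeight G x * #M := by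
  have hfin : Finite (stabilizer G x) := M.finite_toSet.subset hM
  have hcard : Nat.card (stabilizer G x) ≤ #M := by
    rw [← ncard_coe_finset]
    exact ncard_le_ncard hM M.finite_toSet
  rw [stabWeight, le_inv_mul_iff₀ (by exact_mod_cast Nat.card_pos), mul_one]
  exact_mod_cast hcard

lemma stabWeight_le_localWeight {K : Finset G} (hK : 1 ∈ K) (x : Y) :
    stabWeight G x ≤ localWeight K x := by
  have hpos : 0 < #{u ∈ K | u • x = x} := Finset.card_pos.2 ⟨1, by simp [hK]⟩
  rw [localWeight, NNReal.le_inv_iff_mul_le (by exact_mod_cast hpos.ne')]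
  exact stabWeight_mul_card_le_one fun u hu => (Finset.mem_filter.1 hu).2

lemma tendsto_localWeight (x : Y) :
    Tendsto (fun K : Finset G => localWeight K x) atTop (𝓝 (stabWeight G x)) := by
  have hmono : Monotone fun K : Finset G => #{u ∈ K | u • x = x} := fun K K' h =>
    Finset.card_le_card (Finset.filter_subset_filter _ h)
  rcases finite_or_infinite (stabilizer G x) with hfin | hinf
  · refine tendsto_const_nhds.congr' ?_
    have hS : (stabilizer G x : Set G).Finite := hfin
    filter_upwards [eventually_ge_atTop hS.toFinset] with K hK
    have hfilter : hS.toFinset = ({u ∈ K | u • x = x} : Finset G) := by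
      ext u
      simpa using fun hu => hK (hS.mem_toFinset.2 hu)
    rw [stabWeight, localWeight, ← hfilter, ← Nat.card_eq_card_finite_toFinset hS]
    rfl
  · rw [stabWeight, Nat.card_eq_zero_of_infinite, Nat.cast_zero, inv_zero]
    refine tendsto_inv_atTop_zero.comp (tendsto_natCast_atTop_atTop.comp
      (tendsto_atTop_atTop_of_monotone hmono fun n => ?_))
    obtain ⟨K, hK, rfl⟩ := (Set.infinite_coe_iff.1 hinf).exists_subset_card_eq n
    exact ⟨K, (Finset.card_le_card fun u hu => Finset.mem_filter.2 ⟨hu, hK hu⟩)⟩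

lemma stabWeight_le_one (x : Y) : stabWeight G x ≤ 1 :=
  le_of_tendsto' (tendsto_localWeight x) fun K => localWeight_le_one K x

lemma measurableEq_of_countablySeparated (Y : Type*) [MeasurableSpace Y]
    [MeasurableSpace.CountablySeparated Y] : MeasurableEq Y where
  measurableSet_diagonal := by
    obtain ⟨ι, hι, hinj⟩ := MeasurableSpace.measurable_injection_nat_bool_of_countablySeparated Y
    convert measurableSet_eq_fun (hι.comp measurable_fst) (hι.comp measurable_snd) using 1
    ext p
    simp [hinj.eq_iff]

variable [MeasurableSpace Y]

variable (G) in
/-- The measure `μ` with every orbit thinned out by the size of its stabilizers, so that the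
orbit of a point counts as much as the orbit of a point with trivial stabilizer. -/
noncomputable def stabMeasure (μ : Measure Y) : Measure Y :=
  μ.withDensity fun x => (stabWeight G x : ℝ≥0∞)

lemma stabMeasure_le (μ : Measure Y) : stabMeasure G μ ≤ μ :=
  (withDensity_mono (.of_forall fun x => ENNReal.coe_le_one_iff.2 (stabWeight_le_one x))).trans_eq
    withDensity_one

instance (μ : Measure Y) [IsFiniteMeasure μ] : IsFiniteMeasure (stabMeasure G μ) :=
  isFiniteMeasure_of_le μ (stabMeasure_le μ)

variable [MeasurableEq Y] [MeasurableConstSMul G Y]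

lemma measurableSet_fixed (u : G) : MeasurableSet {x : Y | u • x = x} :=
  measurableSet_eq_fun (measurable_const_smul u) measurable_id

@[fun_prop]
lemma measurable_localWeight (K : Finset G) : Measurable (localWeight K : Y → ℝ≥0) := by
  unfold localWeight
  simp only [Finset.card_filter, Nat.cast_sum]
  refine (Finset.measurable_fun_sum _ fun u _ => ?_).inv
  simp only [apply_ite Nat.cast]
  exact .ite (measurableSet_fixed u) measurable_const measurable_const

lemma integrable_localWeight (μ : Measure Y) [IsFiniteMeasure μ] (K : Finset G) :
    Integrable (fun x => (localWeight K x : ℝ)) μ :=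
  .of_bound (by fun_prop) 1 (.of_forall fun x => by simpa using localWeight_le_one K x)

variable [Countable G]

variable (G Y) in
@[fun_prop]
lemma measurable_stabWeight : Measurable (stabWeight G : Y → ℝ≥0) :=
  measurable_of_tendsto_metrizable' atTop measurable_localWeight
    (tendsto_pi_nhds.2 tendsto_localWeight)

variable (G) in
lemma integrable_stabWeight (μ : Measure Y) [IsFiniteMeasure μ] :
    Integrable (fun x => (stabWeight G x : ℝ)) μ :=
  .of_bound (by fun_prop) 1 (.of_forall fun x => by simpa using stabWeight_le_one x)

lemma exists_integral_localWeight_sub_stabWeight_le (μ : Measure Y) [IsFiniteMeasure μ] {ε : ℝ}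
    (hε : 0 < ε) :
    ∃ K : Finset G, 1 ∈ K ∧ ∫ x, ((localWeight K x : ℝ) - stabWeight G x) ∂μ ≤ ε := by
  have hlim : Tendsto (fun K : Finset G => ∫ x, (localWeight K x : ℝ) ∂μ) atTop
      (𝓝 (∫ x, (stabWeight G x : ℝ) ∂μ)) :=
    tendsto_integral_filter_of_dominated_convergence (fun _ => 1)
      (.of_forall fun K => (integrable_localWeight μ K).1)
      (.of_forall fun K => .of_forall fun x => by simpa using localWeight_le_one K x)
      (integrable_const _)
      (.of_forall fun x => (NNReal.continuous_coe.tendsto _).comp (tendsto_localWeight x))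
  obtain ⟨K, hK, h1⟩ := ((hlim.eventually_le_const (lt_add_of_pos_right _ hε)).and
    (eventually_ge_atTop {1})).exists
  refine ⟨K, Finset.singleton_subset_iff.1 h1, ?_⟩
  rw [integral_sub (integrable_localWeight μ K) (integrable_stabWeight G μ)]
  linarith

instance (μ : Measure Y) [SMulInvariantMeasure G Y μ] :
    SMulInvariantMeasure G Y (stabMeasure G μ) where
  measure_preimage_smul g s hs := by
    rw [stabMeasure, withDensity_apply _ hs, withDensity_apply _ (measurable_const_smul g hs),
      ← (measurePreserving_smul g μ).setLIntegral_comp_preimage hs (by fun_prop)]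
    simp only [stabWeight_smul]

lemma integral_stabMeasure (μ : Measure Y) (f : Y → ℝ) :
    ∫ x, f x ∂(stabMeasure G μ) = ∫ x, stabWeight G x * f x ∂μ :=
  integral_withDensity_eq_integral_smul (measurable_stabWeight G Y) f

end StabilizerWeight

section EntropyRate

variable {G : Type*} [Group G] {Y : Type*} [MulAction G Y] {α : Type*}

/-- The word which the orbit of `y` spells along `F` when points are labelled by `Q`. -/
def orbitWord (F : Finset G) (Q : Y → α) (y : Y) : F → α := fun s => Q ((s : G) • y)

/-- The pattern recording which elements of `K` fix `t • y`, for each `t ∈ T`. -/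
def fixPattern (T K : Finset G) (y : Y) (t : T) (u : K) : Prop :=
  (u : G) • (t : G) • y = (t : G) • y

variable (Y) in
/-- Two elements of `F` are identified by a pattern `a` if they move each point with this pattern
to the same place, so that the letters they read in an orbit word are equal. -/
def patternSetoid (T K F : Finset G) (a : T → K → Prop) : Setoid F where
  r s s' := ∀ y : Y, fixPattern T K y = a → (s : G) • y = (s' : G) • y
  iseqv := ⟨fun _ _ _ => rfl, fun h y hy => (h y hy).symm,
    fun h h' y hy => (h y hy).trans (h' y hy)⟩

lemma exists_card_mul_le_subset_mul {L : Finset G} (hL : L.Nonempty) (F : Finset G) :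
    ∃ T : Finset G, (#T : ℝ) * #L ≤ #(L * F) ∧ F ⊆ L⁻¹ * L * T := by
  have hpos : (0 : ℝ) < #L := by exact_mod_cast hL.card_pos
  have hcard : (#(F⁻¹ * L⁻¹) : ℝ) ≤ #(L * F) / #L * #L⁻¹ := by
    rw [← mul_inv_rev, Finset.card_inv, Finset.card_inv, div_mul_cancel₀ _ hpos.ne']
  obtain ⟨T, -, hT, hcov⟩ := Finset.ruzsa_covering_mul hL.inv hcard
  refine ⟨T⁻¹, by rwa [Finset.card_inv, ← le_div_iff₀ hpos], ?_⟩
  simpa [mul_inv_rev, div_eq_mul_inv] using Finset.inv_subset_inv hcov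

lemma exists_eventually_subset_mul [Infinite G] {c ε : ℝ} (hc : 0 ≤ c) (hε : 0 < ε) :
    ∃ N : Finset G, ∀ᶠ F in folner G, ∃ T : Finset G, #T * c ≤ ε * #F ∧ F ⊆ N * T := by
  obtain ⟨n, hn⟩ := exists_nat_gt (2 * c / ε)
  obtain ⟨L, hL⟩ := Infinite.exists_subset_card_eq G (n + 1)
  have hLne : L.Nonempty := Finset.card_pos.1 (by omega)
  have hLpos : (0 : ℝ) < #L := by exact_mod_cast hLne.card_pos
  have hcL : 2 * c ≤ ε * #L := by
    rw [div_lt_iff₀ hε] at hn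
    rw [hL, Nat.cast_add_one]
    nlinarith
  refine ⟨L⁻¹ * L, (eventually_card_mul_le L one_pos).mono fun F hLF => ?_⟩
  obtain ⟨T, hT, hcov⟩ := exists_card_mul_le_subset_mul hLne F
  refine ⟨T, le_of_mul_le_mul_right ?_ hLpos, hcov⟩
  calc #T * c * #L = (#T * #L) * c := by ring
    _ ≤ ((1 + 1) * #F) * c := mul_le_mul_of_nonneg_right (hT.trans hLF) hc
    _ = (2 * c) * #F := by ring
    _ ≤ (ε * #L) * #F := by gcongr
    _ = ε * #F * #L := by ring

lemma card_fixing_le_card_class {F T K : Finset G} {g t : G} (hgt : g * t ∈ F) (ht : t ∈ T)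
    (hK : ∀ u ∈ K, g * u * t ∈ F) (y : Y) :
    #{u ∈ K | u • t • y = t • y} ≤
      #{s' : F | patternSetoid Y T K F (fixPattern T K y) s' ⟨g * t, hgt⟩} := by
  refine Finset.card_le_card_of_injOn
    (fun u => if h : u ∈ K then ⟨g * u * t, hK u h⟩ else ⟨g * t, hgt⟩) (fun u hu => ?_)
    fun u hu v hv huv => ?_
  · obtain ⟨huK, hfix⟩ := Finset.mem_filter.1 hu
    simp only [dif_pos huK, Finset.coe_filter, Finset.mem_univ, true_and, mem_ofPred_eq]
    intro z hz
    have hzfix : u • t • z = t • z := (congrFun (congrFun hz ⟨t, ht⟩) ⟨u, huK⟩).mpr hfix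
    simp only [mul_smul, hzfix]
  · have huK := (Finset.mem_filter.1 hu).1
    have hvK := (Finset.mem_filter.1 hv).1
    simpa [huK, hvK] using huv

lemma inv_card_class_le_localWeight {F T K : Finset G} (h1 : 1 ∈ K) {g t : G} (hgt : g * t ∈ F)
    (ht : t ∈ T) (hK : ∀ u ∈ K, g * u * t ∈ F) (y : Y) :
    (#{s' : F | patternSetoid Y T K F (fixPattern T K y) s' ⟨g * t, hgt⟩} : ℝ)⁻¹ ≤
      localWeight K (t • y) := by
  have hpos : 0 < #{u ∈ K | u • t • y = t • y} := Finset.card_pos.2 ⟨1, by simp [h1]⟩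
  rw [localWeight, NNReal.coe_inv, NNReal.coe_natCast]
  exact inv_anti₀ (by exact_mod_cast hpos) (by exact_mod_cast card_fixing_le_card_class hgt ht hK y)

lemma div_card_class_le {F T K N : Finset G} (h1 : 1 ∈ K) {g t : G} (hg : g ∈ N) (ht : t ∈ T)
    (hgt : g * t ∈ F) {c C : ℝ} (hc : 0 ≤ c) (hcC : c ≤ C) (y : Y) :
    c / #{s' : F | patternSetoid Y T K F (fixPattern T K y) s' ⟨g * t, hgt⟩} ≤
      stabWeight G ((g * t) • y) * c + C * (localWeight K (t • y) - stabWeight G (t • y)) +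
        if g * t ∈ innerBoundary (Finset.image₂ (fun g u => g * u * g⁻¹) N K) F then C else 0 := by
  have hdefect : 0 ≤ (localWeight K (t • y) - stabWeight G (t • y) : ℝ) :=
    sub_nonneg.2 (stabWeight_le_localWeight h1 _)
  rw [div_eq_mul_inv]
  split_ifs with hbad
  · have hle : c * (#{s' : F | patternSetoid Y T K F (fixPattern T K y) s'
        ⟨g * t, hgt⟩} : ℝ)⁻¹ ≤ C :=
      (mul_le_of_le_one_right hc (Nat.cast_inv_le_one _)).trans hcC
    have hfirst : 0 ≤ stabWeight G ((g * t) • y) * c := by positivity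
    have hsecond := mul_nonneg (hc.trans hcC) hdefect
    linarith
  · have hK (u : G) (hu : u ∈ K) : g * u * t ∈ F := by
      simp only [innerBoundary, Finset.mem_filter, hgt, true_and, not_not] at hbad
      simpa [mul_assoc] using hbad _ (Finset.mem_image₂_of_mem hg hu)
    calc c * (#{s' : F | patternSetoid Y T K F (fixPattern T K y) s' ⟨g * t, hgt⟩} : ℝ)⁻¹
        ≤ c * localWeight K (t • y) := by
          gcongr
          exact inv_card_class_le_localWeight h1 hgt ht hK y
      _ = stabWeight G ((g * t) • y) * c + c * (localWeight K (t • y) - stabWeight G (t • y)) := by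
          rw [mul_smul, stabWeight_smul]
          ring
      _ ≤ _ := by
          rw [add_zero]
          gcongr

variable [MeasurableSpace Y] [MeasurableConstSMul G Y]

lemma measurable_orbitWord [MeasurableSpace α] (F : Finset G) {Q : Y → α} (hQ : Measurable Q) :
    Measurable (orbitWord F Q) :=
  measurable_pi_iff.2 fun s => hQ.comp (measurable_const_smul (s : G))

lemma measurable_fixPattern [MeasurableEq Y] (T K : Finset G) :
    Measurable (fixPattern T K : Y → T → K → Prop) :=
  measurable_pi_iff.2 fun t => measurable_pi_iff.2 fun u =>
    measurableSet_setOfPred.1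
      ((measurableSet_fixed (u : G)).preimage (measurable_const_smul (t : G)))

variable [MeasurableEq Y] [Countable G]

lemma integral_div_card_class_le (μ : Measure Y) [IsProbabilityMeasure μ]
    [SMulInvariantMeasure G Y μ] {f : Y → ℝ} (hf : Measurable f) {C : ℝ} (hf0 : ∀ y, 0 ≤ f y)
    (hfC : ∀ y, f y ≤ C) {F T K N : Finset G} (h1 : 1 ∈ K) {g t : G} (hg : g ∈ N) (ht : t ∈ T)
    (hgt : g * t ∈ F) :
    ∫ y, f ((g * t) • y) / #{s' : F | patternSetoid Y T K F (fixPattern T K y) s' ⟨g * t, hgt⟩} ∂μ ≤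
      ∫ y, f y ∂(stabMeasure G μ) + C * ∫ y, ((localWeight K y : ℝ) - stabWeight G y) ∂μ +
        if g * t ∈ innerBoundary (Finset.image₂ (fun g u => g * u * g⁻¹) N K) F then C else 0 := by
  let cost (y : Y) : ℝ := stabWeight G y * f y
  let defect (y : Y) : ℝ := localWeight K y - stabWeight G y
  have hshift {φ : Y → ℝ} (hφ : Integrable φ μ) (g : G) : Integrable (fun y => φ (g • y)) μ :=
    (measurePreserving_smul g μ).integrable_comp_of_integrable hφ
  have hcost : Integrable (fun y => cost ((g * t) • y)) μ :=
    hshift ((integrable_stabWeight G μ).mul_bdd (c := C) hf.aestronglyMeasurable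
      (.of_forall fun y => by rw [Real.norm_of_nonneg (hf0 y)]; exact hfC y)) _
  have hdefect : Integrable (fun y => C * defect (t • y)) μ :=
    (hshift ((integrable_localWeight μ K).sub (integrable_stabWeight G μ)) t).const_mul C
  refine (integral_mono_of_nonneg (.of_forall fun y => div_nonneg (hf0 _) (Nat.cast_nonneg _))
    ((hcost.add hdefect).add (integrable_const _))
    (.of_forall fun y => div_card_class_le h1 hg ht hgt (hf0 _) (hfC _) y)).trans_eq ?_
  rw [integral_add' (hcost.add hdefect) (integrable_const _), integral_add' hcost hdefect,
    integral_const_mul, integral_smul_eq_self cost, integral_smul_eq_self defect, integral_const,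
    probReal_univ, one_smul, integral_stabMeasure]

variable [Fintype α] [MeasurableSpace α] [MeasurableSingletonClass α]

lemma entropy_orbitWord_le_of_subset_mul (μ : Measure Y) [IsProbabilityMeasure μ]
    [SMulInvariantMeasure G Y μ] {Q : Y → α} (hQ : Measurable Q) {q : α → ℝ} (hq : ∀ a, 0 < q a)
    (hq1 : ∑ a, q a ≤ 1) {C : ℝ} (hC : ∀ a, -Real.log (q a) ≤ C) {F T K N : Finset G} (h1 : 1 ∈ K)
    (hF : F ⊆ N * T) :
    entropy μ (orbitWord F Q) ≤ #T * (#K * Real.log 2) +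
      (#F * (∫ y, -Real.log (q (Q y)) ∂(stabMeasure G μ) +
        C * ∫ y, ((localWeight K y : ℝ) - stabWeight G y) ∂μ) +
      C * #(innerBoundary (Finset.image₂ (fun g u => g * u * g⁻¹) N K) F)) := by
  have hc (a : α) : 0 ≤ -Real.log (q a) :=
    neg_nonneg.2 (Real.log_nonpos (hq a).le
      ((Finset.single_le_sum (fun b _ => (hq b).le) (Finset.mem_univ a)).trans hq1))
  have hsummand (s : F) : ∫ y, -Real.log (q (Q ((s : G) • y))) /
      #{s' : F | patternSetoid Y T K F (fixPattern T K y) s' s} ∂μ ≤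
        ∫ y, -Real.log (q (Q y)) ∂(stabMeasure G μ) +
          C * ∫ y, ((localWeight K y : ℝ) - stabWeight G y) ∂μ +
        if (s : G) ∈ innerBoundary (Finset.image₂ (fun g u => g * u * g⁻¹) N K) F then C
        else 0 := by
    obtain ⟨_, hs⟩ := s
    obtain ⟨g, hg, t, ht, rfl⟩ := Finset.mem_mul.1 (hF hs)
    exact integral_div_card_class_le μ
      ((Measurable.of_discrete (f := fun a => -Real.log (q a))).comp hQ)
      (fun _ => hc _) (fun _ => hC _) h1 hg ht hs
  have hbad : ∑ s : F, (if (s : G) ∈ innerBoundary (Finset.image₂ (fun g u => g * u * g⁻¹) N K) F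
      then C else 0) = C * #(innerBoundary (Finset.image₂ (fun g u => g * u * g⁻¹) N K) F) := by
    rw [Finset.sum_coe_sort F fun s => if s ∈ innerBoundary _ F then C else 0, Finset.sum_ite_mem,
      Finset.inter_eq_right.2 (innerBoundary_subset _ F), Finset.sum_const, nsmul_eq_mul, mul_comm]
  have hlabels : Real.log (Fintype.card (T → K → Prop)) = #T * (#K * Real.log 2) := by simp
  refine (entropy_le_of_label μ (measurable_fixPattern T K) (measurable_orbitWord F hQ)
    (patternSetoid Y T K F) (fun y s s' h => congrArg Q (h y rfl)) hq hq1).trans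
    (add_le_add hlabels.le ?_)
  rw [integral_finsetSum _ fun s _ => integrable_comp_of_finite μ
    ((measurable_fixPattern T K).prodMk (measurable_orbitWord F hQ)) fun p =>
      -Real.log (q (p.2 s)) / (#{s' : F | patternSetoid Y T K F p.1 s' s} : ℝ)]
  refine (Finset.sum_le_sum fun s _ => hsummand s).trans_eq ?_
  rw [Finset.sum_add_distrib, hbad, Finset.sum_const, Finset.card_univ, Fintype.card_coe,
    nsmul_eq_mul]

theorem eventually_entropy_orbitWord_le [Infinite G] (μ : Measure Y) [IsProbabilityMeasure μ]
    [SMulInvariantMeasure G Y μ] {Q : Y → α} (hQ : Measurable Q) {q : α → ℝ} (hq : ∀ a, 0 < q a)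
    (hq1 : ∑ a, q a ≤ 1) {ε : ℝ} (hε : 0 < ε) :
    ∀ᶠ F in folner G, entropy μ (orbitWord F Q) ≤
      (∫ y, -Real.log (q (Q y)) ∂(stabMeasure G μ) + ε) * #F := by
  obtain ⟨C, hC0, hC⟩ : ∃ C : ℝ, 0 < C ∧ ∀ a, -Real.log (q a) ≤ C := by
    obtain ⟨C, hC⟩ := (Set.finite_range fun a => -Real.log (q a)).bddAbove
    exact ⟨max C 1, by positivity, fun a => le_max_of_le_left (hC ⟨a, rfl⟩)⟩
  have hε3 : 0 < ε / 3 := by positivity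
  obtain ⟨K, h1, hK⟩ := exists_integral_localWeight_sub_stabWeight_le (G := G) μ
    (div_pos hε3 hC0)
  obtain ⟨N, hN⟩ := exists_eventually_subset_mul (G := G)
    (by positivity : 0 ≤ #K * Real.log 2) hε3
  filter_upwards [hN, eventually_card_innerBoundary_le
    (Finset.image₂ (fun g u => g * u * g⁻¹) N K) (div_pos hε3 hC0)] with F hF hbad
  obtain ⟨T, hpattern, hcov⟩ := hF
  have hdefect : C * ∫ y, ((localWeight K y : ℝ) - stabWeight G y) ∂μ ≤ ε / 3 := by
    rwa [← le_div_iff₀' hC0]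
  have hboundary : C * #(innerBoundary (Finset.image₂ (fun g u => g * u * g⁻¹) N K) F) ≤
      ε / 3 * #F := by
    rwa [← le_div_iff₀' hC0, ← div_mul_eq_mul_div]
  have hF := mul_le_mul_of_nonneg_left hdefect (Nat.cast_nonneg (α := ℝ) #F)
  linarith [entropy_orbitWord_le_of_subset_mul μ hQ hq hq1 hC h1 hcov]

end EntropyRate

section MassTransport

variable {G : Type*} [Group G] {Y : Type*} [MulAction G Y]

lemma one_le_stabWeight_mul_card_mem_smul {K : Finset G} {V : Set Y}
    (hVinv : ∀ (g : G), ∀ x ∈ V, g • x ∈ V) (hVK : ∀ x ∈ V, (stabilizer G x : Set G) ⊆ K)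
    {E F : Finset G} {B : Set Y} {x : Y} (hxV : x ∈ V) (hxF : x ∉ (F : Set G) • B)
    (hxE : ∃ s ∈ E, s • x ∈ (F : Set G) • B) :
    1 ≤ stabWeight G x * #{s ∈ (E⁻¹ * K * F) \ F | x ∈ s • B} := by
  obtain ⟨s, hs, t, ht, b, hb, htb : t • b = s • x⟩ := hxE
  have hxb : x = (s⁻¹ * t) • b := by rw [mul_smul, htb, inv_smul_smul]
  have hstab (u : G) (hu : u • x = x) :
      u ∈ ({m ∈ (E⁻¹ * K * F) \ F | x ∈ m • B} : Finset G).image (· * (s⁻¹ * t)⁻¹) := by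
    have hmem : x ∈ (u * (s⁻¹ * t)) • B := ⟨b, hb, by
      change (u * (s⁻¹ * t)) • b = x
      rw [mul_smul, ← hxb, hu]⟩
    have hconj : s * u * s⁻¹ ∈ K := hVK (s • x) (hVinv s x hxV) (by
      change (s * u * s⁻¹) • s • x = s • x
      rw [mul_smul, inv_smul_smul, mul_smul, hu])
    have hM : u * (s⁻¹ * t) ∈ (E⁻¹ * K * F) \ F := by
      refine Finset.mem_sdiff.2 ⟨?_, fun hF => hxF (smul_set_subset_smul hF hmem)⟩
      have hprod := Finset.mul_mem_mul (Finset.mul_mem_mul (Finset.inv_mem_inv hs) hconj) ht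
      rwa [show s⁻¹ * (s * u * s⁻¹) * t = u * (s⁻¹ * t) by group] at hprod
    exact Finset.mem_image.2 ⟨_, Finset.mem_filter.2 ⟨hM, hmem⟩, mul_inv_cancel_right _ _⟩
  have hle := one_le_stabWeight_mul_card hstab
  rwa [Finset.card_image_of_injective _ (mul_left_injective _)] at hle

/-- Each element of `M` either fixes `C` pointwise or moves it off itself. -/
def FixesOrMoves (M : Finset G) (C : Set Y) : Prop :=
  ∀ u ∈ M, (∀ x ∈ C, u • x = x) ∨ Disjoint C (u • C)

lemma FixesOrMoves.mono {M : Finset G} {B C : Set Y} (h : FixesOrMoves M C) (hBC : B ⊆ C) :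
    FixesOrMoves M B := fun u hu =>
  (h u hu).imp (fun hfix x hx => hfix x (hBC hx)) (.mono hBC (smul_set_mono hBC))

lemma FixesOrMoves.stabWeight_mul_card_smul_le_one {F : Finset G} {B : Set Y}
    (hB : FixesOrMoves (F⁻¹ * F) B) (y : Y) : stabWeight G y * #{s ∈ F | y ∈ s • B} ≤ 1 := by
  rcases ({s ∈ F | y ∈ s • B} : Finset G).eq_empty_or_nonempty with h | ⟨t, ht⟩
  · simp [h]
  obtain ⟨htF, b, hb, rfl⟩ := Finset.mem_filter.1 ht
  rw [← Finset.card_image_of_injective _ (mul_left_injective t⁻¹)]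
  refine stabWeight_mul_card_le_one fun u hu => ?_
  obtain ⟨s, hs, rfl⟩ := Finset.mem_image.1 hu
  obtain ⟨hsF, b', hb', hsb : s • b' = t • b⟩ := Finset.mem_filter.1 hs
  have hb'b : b' = (s⁻¹ * t) • b := by rw [mul_smul, ← hsb, inv_smul_smul]
  rcases hB _ (Finset.mul_mem_mul (Finset.inv_mem_inv hsF) htF) with hfix | hdisj
  · rw [hfix b hb] at hb'b
    change (s * t⁻¹) • t • b = t • b
    rw [mul_smul, inv_smul_smul, ← hsb, hb'b]
  · exact absurd (hb'b ▸ smul_mem_smul_set hb) (disjoint_left.1 hdisj hb')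

variable [MeasurableSpace Y] [MeasurableConstSMul G Y]

lemma lintegral_card_mem (ν : Measure Y) {ι : Type*} (F : Finset ι) {A : ι → Set Y}
    (hA : ∀ s, MeasurableSet (A s)) (B : Set Y) :
    ∫⁻ x in B, #{s ∈ F | x ∈ A s} ∂ν = ∑ s ∈ F, ν (A s ∩ B) := by
  simp only [Finset.card_filter, Nat.cast_sum]
  rw [lintegral_finsetSum _ fun s _ => ?_]
  · refine Finset.sum_congr rfl fun s _ => ?_
    rw [← Measure.restrict_apply (hA s), ← lintegral_indicator_one (hA s)]
    simp only [indicator_apply, Nat.cast_ite, Nat.cast_one, Nat.cast_zero, Pi.one_apply]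
  · simp only [apply_ite Nat.cast]
    exact .ite (hA s) measurable_const measurable_const

lemma setLIntegral_card_smul_mem (ν : Measure Y) [SMulInvariantMeasure G Y ν] (F : Finset G)
    {B E : Set Y} (hB : MeasurableSet B) (hE : MeasurableSet E) :
    ∫⁻ x in B, #{s ∈ F | s • x ∈ E} ∂ν = ∫⁻ y in E, #{s ∈ F | y ∈ s • B} ∂ν := by
  rw [lintegral_card_mem ν F (fun s => hB.const_smul s) E]
  refine (lintegral_card_mem ν F (fun s => measurable_const_smul s hE) B).trans
    (Finset.sum_congr rfl fun s _ => ?_)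
  rw [← measure_preimage_smul ν s (s • B ∩ E), preimage_inter, preimage_smul s (s • B),
    inv_smul_smul, inter_comm]

variable [MeasurableEq Y] [Countable G]

lemma setLIntegral_stabMeasure (μ : Measure Y) {f : Y → ℝ≥0∞} (hf : Measurable f) {E : Set Y}
    (hE : MeasurableSet E) :
    ∫⁻ x in E, f x ∂(stabMeasure G μ) = ∫⁻ x in E, stabWeight G x * f x ∂μ :=
  setLIntegral_withDensity_eq_setLIntegral_mul μ (by fun_prop) hf hE

lemma ae_stabMeasure_finite_stabilizer (μ : Measure Y) :
    ∀ᵐ x ∂(stabMeasure G μ), (stabilizer G x : Set G).Finite := by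
  refine (ae_withDensity_iff (by fun_prop)).2 (.of_forall fun x hx => ?_)
  by_contra hinf
  have : Infinite (stabilizer G x) := Set.infinite_coe_iff.2 hinf
  exact hx (by rw [stabWeight, Nat.card_eq_zero_of_infinite, Nat.cast_zero, inv_zero]; rfl)

lemma exists_stabilizer_smul_subset (μ : Measure Y) [IsFiniteMeasure μ] [SMulInvariantMeasure G Y μ]
    {M : Finset G} (hM : μ {x | (stabilizer G x : Set G) = M} ≠ 0) :
    ∃ K : Finset G, ∀ x : Y, (stabilizer G x : Set G) = M →
      ∀ g : G, (stabilizer G (g • x) : Set G) ⊆ K := by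
  let A (M : Finset G) : Set Y := {x | (stabilizer G x : Set G) = M}
  have hA (M : Finset G) : MeasurableSet (A M) := by
    have hinter : A M = ⋂ u : G, {x | u • x = x ↔ u ∈ M} := by
      ext x
      simp [A, Set.ext_iff]
    rw [hinter]
    exact .iInter fun u => (measurableSet_fixed u).iff (.const _)
  have hdisj : Pairwise (Function.onFun Disjoint A) := fun M M' hne =>
    disjoint_left.2 fun x hx hx' => hne (Finset.coe_injective (hx.symm.trans hx'))
  have hfin : {M' | μ (A M) ≤ μ (A M')}.Finite :=
    Measure.finite_const_le_meas_of_disjoint_iUnion μ (pos_iff_ne_zero.2 hM) hA hdisj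
      (measure_ne_top _ _)
  refine ⟨hfin.toFinset.biUnion id, fun x hx g u hu => ?_⟩
  have hconj {y : Y} (hy : y ∈ A M) : g • y ∈ A (M.image (MulAut.conj g)) := by
    change (stabilizer G y : Set G) = M at hy
    change (stabilizer G (g • y) : Set G) = _
    rw [stabilizer_smul_eq_stabilizer_map_conj, Subgroup.coe_map, hy, Finset.coe_image]
    rfl
  have hle : μ (A M) ≤ μ (A (M.image (MulAut.conj g))) := by
    rw [← measure_preimage_smul μ g (A (M.image (MulAut.conj g)))]
    exact measure_mono fun y hy => hconj hy
  have hmem : u ∈ M.image (MulAut.conj g) := (hconj hx).le hu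
  exact Finset.mem_biUnion.2 ⟨_, hfin.mem_toFinset.2 hle, hmem⟩

theorem exists_invariant_stabilizer_subset (μ : Measure Y) [IsFiniteMeasure μ]
    [SMulInvariantMeasure G Y μ] {c : ℝ≥0∞} (hc : c ≠ 0) :
    ∃ (K : Finset G) (V : Set Y), MeasurableSet V ∧ (∀ (g : G), ∀ x ∈ V, g • x ∈ V) ∧
      (∀ x ∈ V, (stabilizer G x : Set G) ⊆ K) ∧ stabMeasure G μ Vᶜ ≤ c := by
  let V (K : Finset G) : Set Y := {x | ∀ g : G, (stabilizer G (g • x) : Set G) ⊆ K}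
  have hV (K : Finset G) : MeasurableSet (V K) := by
    have hinter : V K = ⋂ (g : G) (u : G) (_ : u ∉ K), (g • ·) ⁻¹' {x : Y | u • x = x}ᶜ := by
      ext x
      simp only [V, Set.subset_def, mem_ofPred_eq, mem_iInter, SetLike.mem_coe, mem_stabilizer_iff,
        mem_preimage, mem_compl_iff]
      exact forall₂_congr fun g u => not_imp_not.symm
    rw [hinter]
    exact .iInter fun g => .iInter fun u => .iInter fun _ =>
      measurable_const_smul g (measurableSet_fixed u).compl
  have hanti : Antitone fun K => (V K)ᶜ := fun K K' h =>
    compl_subset_compl.2 fun x hx g => (hx g).trans h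
  have hzero : stabMeasure G μ (⋂ K, (V K)ᶜ) = 0 := by
    have hpos : ∀ᵐ x ∂(stabMeasure G μ), ∀ M : Finset G,
        μ {x | (stabilizer G x : Set G) = M} = 0 → (stabilizer G x : Set G) ≠ M :=
      (Measure.absolutelyContinuous_of_le (stabMeasure_le μ)).ae_le <| ae_all_iff.2 fun M =>
        eventually_imp_distrib_left.2 measure_eq_zero_iff_ae_notMem.1
    refine measure_eq_zero_iff_ae_notMem.2 ?_
    filter_upwards [ae_stabMeasure_finite_stabilizer μ, hpos] with x hfin hx hxV
    have hcoe : (stabilizer G x : Set G) = hfin.toFinset := hfin.coe_toFinset.symm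
    obtain ⟨K, hK⟩ := exists_stabilizer_smul_subset μ fun h => hx _ h hcoe
    exact mem_iInter.1 hxV K (hK x hcoe)
  have hlim := tendsto_measure_iInter_atTop (μ := stabMeasure G μ)
    (fun K => (hV K).compl.nullMeasurableSet) hanti ⟨∅, measure_ne_top _ _⟩
  rw [hzero] at hlim
  obtain ⟨K, hK⟩ := (hlim.eventually_le_const (pos_iff_ne_zero.2 hc)).exists
  exact ⟨K, V K, hV K, fun g x hx h => mul_smul h g x ▸ hx (h * g),
    fun x hx => by simpa using hx 1, hK⟩

end MassTransport

section Cover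

variable {G : Type*} [Group G] {Y : Type*} [MulAction G Y] [MeasurableSpace Y]
  [MeasurableConstSMul G Y] [MeasurableSpace.CountablySeparated Y]

lemma exists_cover_fixesOrMoves_singleton (u : G) : ∃ C : ℕ → Set Y,
    (∀ n, MeasurableSet (C n)) ∧ (∀ x, ∃ n, x ∈ C n) ∧ ∀ n, FixesOrMoves {u} (C n) := by
  obtain ⟨ι, hι, hinj⟩ := MeasurableSpace.measurable_injection_nat_bool_of_countablySeparated Y
  let C : Option (ℕ × Bool) → Set Y
    | none => {x | u • x = x}
    | some (k, b) => {x | ι x k = b ∧ ι (u • x) k = !b}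
  obtain ⟨e, he⟩ := exists_surjective_nat (Option (ℕ × Bool))
  suffices h : (∀ p, MeasurableSet (C p)) ∧ (∀ x, ∃ p, x ∈ C p) ∧ ∀ p, FixesOrMoves {u} (C p) from
    ⟨C ∘ e, fun n => h.1 (e n), fun x => he.exists.1 (h.2.1 x), fun n => h.2.2 (e n)⟩
  refine ⟨?_, fun x => ?_, ?_⟩
  · rintro (_ | ⟨k, b⟩)
    · have := measurableEq_of_countablySeparated Y
      exact measurableSet_fixed u
    · have hbit (b : Bool) : MeasurableSet {x | ι x k = b} :=
        (measurable_pi_apply k).comp hι (measurableSet_singleton b)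
      exact (hbit b).inter (measurable_const_smul u (hbit !b))
  · by_cases hfix : u • x = x
    · exact ⟨none, hfix⟩
    · obtain ⟨k, hk⟩ := Function.ne_iff.1 fun h => hfix (hinj h)
      exact ⟨some (k, ι x k), rfl, Bool.eq_not.2 hk⟩
  · rintro (_ | ⟨k, b⟩) v hv <;> obtain rfl := Finset.mem_singleton.1 hv
    · exact .inl fun x hx => hx
    · refine .inr (disjoint_left.2 ?_)
      rintro _ hx ⟨x, hx', rfl⟩
      exact (Bool.eq_not_self b).1 (hx.1.symm.trans hx'.2)

lemma exists_cover_fixesOrMoves (M : Finset G) : ∃ C : ℕ → Set Y,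
    (∀ n, MeasurableSet (C n)) ∧ (∀ x, ∃ n, x ∈ C n) ∧ ∀ n, FixesOrMoves M (C n) := by
  choose C hC hcov hfix using fun u : M => exists_cover_fixesOrMoves_singleton (Y := Y) (u : G)
  obtain ⟨e, he⟩ := exists_surjective_nat (M → ℕ)
  refine ⟨fun n => ⋂ u, C u (e n u), fun n => .iInter fun u => hC u _, fun x => ?_,
    fun n u hu => ?_⟩
  · choose a ha using fun u => hcov u x
    obtain ⟨n, rfl⟩ := he a
    exact ⟨n, mem_iInter.2 ha⟩
  · exact (hfix ⟨u, hu⟩ (e n ⟨u, hu⟩)).mono (iInter_subset (fun u => C u (e n u)) ⟨u, hu⟩) u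
      (Finset.mem_singleton_self u)

end Cover

section Greedy

variable {G : Type*} [Group G] {Y : Type*} [MulAction G Y]

/-- The part of `Y` covered before stage `n` of a tiling with shapes `E i` and centres `B i` which
starts from the covered part `Z`. -/
def tiled (Z : Set Y) (E : ℕ → Finset G) (B : ℕ → Set Y) (n : ℕ) : Set Y :=
  Z ∪ ⋃ i < n, (E i : Set G) • B i

lemma tiled_zero (Z : Set Y) (E : ℕ → Finset G) (B : ℕ → Set Y) : tiled Z E B 0 = Z := by
  simp [tiled]

lemma tiled_succ (Z : Set Y) (E : ℕ → Finset G) (B : ℕ → Set Y) (n : ℕ) :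
    tiled Z E B (n + 1) = tiled Z E B n ∪ (E n : Set G) • B n := by
  rw [tiled, tiled, biUnion_lt_succ, union_assoc]

lemma subset_tiled (Z : Set Y) (E : ℕ → Finset G) (B : ℕ → Set Y) (n : ℕ) : Z ⊆ tiled Z E B n :=
  subset_union_left

lemma tiled_subset_tiled_succ (Z : Set Y) (E : ℕ → Finset G) (B : ℕ → Set Y) (n : ℕ) :
    tiled Z E B n ⊆ tiled Z E B (n + 1) :=
  (tiled_succ Z E B n).symm ▸ subset_union_left

lemma tiled_const_subset (Z : Set Y) (F : Finset G) (B : ℕ → Set Y) (n : ℕ) :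
    tiled Z (fun _ => F) B n ⊆ Z ∪ (F : Set G) • ⋃ i, B i :=
  union_subset_union_right Z <| iUnion₂_subset fun i _ => smul_subset_smul_left (subset_iUnion B i)

variable [MeasurableSpace Y] [MeasurableConstSMul G Y]

lemma measurableSet_finset_smul (F : Finset G) {B : Set Y} (hB : MeasurableSet B) :
    MeasurableSet ((F : Set G) • B) := by
  rw [← iUnion_smul_set]
  exact Finset.measurableSet_biUnion F fun s _ => hB.const_smul s

lemma measurableSet_tiled {Z : Set Y} (hZ : MeasurableSet Z) (E : ℕ → Finset G) {B : ℕ → Set Y}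
    (hB : ∀ n, MeasurableSet (B n)) (n : ℕ) : MeasurableSet (tiled Z E B n) :=
  hZ.union (.biUnion (to_countable _) fun i _ => measurableSet_finset_smul (E i) (hB i))

lemma exists_greedy {P : ℕ → Set Y → Set Y → Prop} (E : ℕ → Finset G) {Z : Set Y}
    (hZ : MeasurableSet Z) (h : ∀ n W, MeasurableSet W → ∃ b, MeasurableSet b ∧ P n W b) :
    ∃ B : ℕ → Set Y, ∀ n, MeasurableSet (B n) ∧ P n (tiled Z E B n) (B n) := by
  choose b hb using fun n (W : {W : Set Y // MeasurableSet W}) => h n W W.2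
  let W (n : ℕ) : {W : Set Y // MeasurableSet W} :=
    Nat.rec ⟨Z, hZ⟩ (fun n W => ⟨W ∪ (E n : Set G) • b n W,
      W.2.union (measurableSet_finset_smul _ (hb n W).1)⟩) n
  have hW (n : ℕ) : (W n).1 = tiled Z E (fun n => b n (W n)) n := by
    induction n with
    | zero => exact (tiled_zero _ _ _).symm
    | succ n ih => rw [tiled_succ, ← ih]
  exact ⟨fun n => b n (W n), fun n => hW n ▸ hb n (W n)⟩

lemma sum_measure_smul_sdiff_tiled (μ : Measure Y) {Z : Set Y} (hZ : MeasurableSet Z)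
    (E : ℕ → Finset G) {B : ℕ → Set Y} (hB : ∀ n, MeasurableSet (B n)) (n : ℕ) :
    ∑ i ∈ Finset.range n, μ (((E i : Set G) • B i) \ tiled Z E B i) = μ (tiled Z E B n \ Z) := by
  induction n with
  | zero => simp [tiled_zero]
  | succ n ih =>
    have hmeas := measurableSet_tiled hZ E hB n
    have hsplit : tiled Z E B (n + 1) \ Z =
        (tiled Z E B n \ Z) ∪ (((E n : Set G) • B n) \ tiled Z E B n) := by
      ext x
      have := @subset_tiled _ _ _ _ Z E B n x
      simp only [tiled_succ, mem_union, Set.mem_sdiff]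
      tauto
    rw [Finset.sum_range_succ, ih, hsplit, measure_union _
      ((measurableSet_finset_smul _ (hB n)).diff hmeas)]
    exact disjoint_sdiff_right.mono_left sdiff_subset

end Greedy

section QuasiTiling

variable {G : Type*} [Group G] {Y : Type*} [MulAction G Y] [MeasurableSpace Y]
  [MeasurableConstSMul G Y]

lemma measurable_card_mem_smul (F : Finset G) {B : Set Y} (hB : MeasurableSet B) :
    Measurable fun y => (#{s ∈ F | y ∈ s • B} : ℝ≥0∞) := by
  simp only [Finset.card_filter, Nat.cast_sum, apply_ite Nat.cast]
  exact Finset.measurable_fun_sum _ fun s _ =>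
    .ite (hB.const_smul s) measurable_const measurable_const

lemma measurable_card_smul_mem (F : Finset G) {W : Set Y} (hW : MeasurableSet W) :
    Measurable fun x => (#{s ∈ F | s • x ∈ W} : ℝ) := by
  simp only [Finset.card_filter, Nat.cast_sum, apply_ite Nat.cast]
  exact Finset.measurable_fun_sum _ fun s _ =>
    .ite (measurable_const_smul s hW) measurable_const measurable_const

lemma mul_measureReal_le_of_le_card_smul_mem (μ : Measure Y) [IsFiniteMeasure μ]
    [SMulInvariantMeasure G Y μ] {E : Finset G} (hE : E.Nonempty) {A I : Set Y}
    (hA : MeasurableSet A) (hI : MeasurableSet I) {ε : ℝ}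
    (h : ∀ x ∈ I, ε * #E ≤ #{s ∈ E | s • x ∈ A}) : ε * μ.real I ≤ μ.real A := by
  have hpos : (0 : ℝ) < #E := by exact_mod_cast hE.card_pos
  have hle : ENNReal.ofReal (ε * #E) * μ I ≤ #E * μ A := by
    calc ENNReal.ofReal (ε * #E) * μ I ≤ ∫⁻ x in I, #{s ∈ E | s • x ∈ A} ∂μ := by
          rw [← setLIntegral_const]
          refine setLIntegral_mono' hI fun x hx => ?_
          rw [← ENNReal.ofReal_natCast]
          exact ENNReal.ofReal_le_ofReal (h x hx)
      _ = ∑ s ∈ E, μ ((s • ·) ⁻¹' A ∩ I) :=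
          lintegral_card_mem μ E (fun s => measurable_const_smul s hA) I
      _ ≤ ∑ _s ∈ E, μ A := Finset.sum_le_sum fun s _ =>
          (measure_mono inter_subset_left).trans_eq (measure_preimage_smul μ s A)
      _ = #E * μ A := by rw [Finset.sum_const, nsmul_eq_mul]
  have hreal := ENNReal.toReal_mono (by finiteness) hle
  rw [ENNReal.toReal_mul, ENNReal.toReal_mul, ENNReal.toReal_natCast] at hreal
  refine le_of_mul_le_mul_left ?_ hpos
  calc #E * (ε * μ.real I) = ε * #E * μ.real I := by ring
    _ ≤ (ENNReal.ofReal (ε * #E)).toReal * μ.real I := by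
        gcongr
        exact (le_max_left _ _).trans_eq ENNReal.toReal_ofReal'.symm
    _ ≤ #E * μ.real A := hreal

lemma measureReal_sdiff_le (μ : Measure Y) [IsFiniteMeasure μ] [SMulInvariantMeasure G Y μ]
    {E : Finset G} (hE : E.Nonempty) {V D W W' : Set Y} (hV : MeasurableSet V)
    (hVinv : ∀ (g : G), ∀ x ∈ V, g • x ∈ V) (hD : MeasurableSet D) (hW : MeasurableSet W)
    (hW' : MeasurableSet W') (hWW' : W ⊆ W') {ε : ℝ} (hε : 0 ≤ ε)
    (hcov : ∀ x ∈ D, ε * #E ≤ #{s ∈ E | s • x ∈ W'}) :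
    μ.real (V \ W') ≤ (1 - ε) * μ.real (V \ W) +
      ε * (μ.real Dᶜ + μ.real {x ∈ V | x ∉ W ∧ ∃ s ∈ E, s • x ∈ W}) := by
  let I : Set Y := (V ∩ D) \ ⋃ s ∈ E, (s • ·) ⁻¹' W
  have hI : MeasurableSet I := (hV.inter hD).diff
    (Finset.measurableSet_biUnion _ fun s _ => measurable_const_smul s hW)
  have hgain : ε * μ.real I ≤ μ.real (V ∩ (W' \ W)) := by
    refine mul_measureReal_le_of_le_card_smul_mem μ hE (hV.inter (hW'.diff hW)) hI fun x hx => ?_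
    refine (hcov x hx.1.2).trans ?_
    refine Nat.cast_le.2 (Finset.card_le_card fun s hs => ?_)
    simp only [Finset.mem_filter] at hs ⊢
    exact ⟨hs.1, hVinv s x hx.1.1, hs.2, fun h => hx.2 (mem_iUnion₂.2 ⟨s, hs.1, h⟩)⟩
  have hsplit : μ.real (V \ W) = μ.real (V \ W') + μ.real (V ∩ (W' \ W)) := by
    rw [← measureReal_union _ (hV.inter (hW'.diff hW))]
    · congr 1
      ext x
      have := @hWW' x
      simp only [Set.mem_sdiff, mem_union, mem_inter_iff]
      tauto
    · exact disjoint_left.2 fun x hx hx' => hx.2 hx'.2.1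
  have hrest : μ.real (V \ W) ≤
      μ.real I + (μ.real Dᶜ + μ.real {x ∈ V | x ∉ W ∧ ∃ s ∈ E, s • x ∈ W}) := by
    have hsub : V \ W ⊆ I ∪ (Dᶜ ∪ {x ∈ V | x ∉ W ∧ ∃ s ∈ E, s • x ∈ W}) := by
      intro x hx
      by_cases hxs : ∃ s ∈ E, s • x ∈ W
      · exact .inr (.inr ⟨hx.1, hx.2, hxs⟩)
      · by_cases hxD : x ∈ D
        · exact .inl ⟨⟨hx.1, hxD⟩, by simpa using hxs⟩
        · exact .inr (.inl hxD)
    grw [measureReal_mono hsub, measureReal_union_le, measureReal_union_le]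
  nlinarith

lemma sum_card_mul_stabMeasure_le (μ : Measure Y) [IsProbabilityMeasure μ] (E : ℕ → Finset G)
    {B : ℕ → Set Y} (hB : ∀ i, MeasurableSet (B i)) {ε : ℝ}
    (h : ∀ i, (1 - ε) * #(E i) * (stabMeasure G μ).real (B i) ≤
      μ.real (((E i : Set G) • B i) \ tiled ∅ E B i)) (n : ℕ) :
    (1 - ε) * ∑ i ∈ Finset.range n, #(E i) * (stabMeasure G μ).real (B i) ≤ 1 := by
  calc (1 - ε) * ∑ i ∈ Finset.range n, #(E i) * (stabMeasure G μ).real (B i)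
      ≤ ∑ i ∈ Finset.range n, μ.real (((E i : Set G) • B i) \ tiled ∅ E B i) := by
        rw [Finset.mul_sum]
        exact Finset.sum_le_sum fun i _ => (mul_assoc _ _ _).symm.trans_le (h i)
    _ = μ.real (tiled ∅ E B n \ ∅) := by
        rw [measureReal_def, ← sum_measure_smul_sdiff_tiled μ .empty E hB,
          ENNReal.toReal_sum fun i _ => measure_ne_top _ _]
        rfl
    _ ≤ 1 := measureReal_le_one

variable [Countable G]

lemma mul_stabMeasure_le_of_fixesOrMoves [MeasurableEq Y] (μ : Measure Y)
    [SMulInvariantMeasure G Y μ] {F : Finset G} {B A : Set Y} (hF : FixesOrMoves (F⁻¹ * F) B)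
    (hB : MeasurableSet B) (hA : MeasurableSet A) {a : ℝ≥0∞}
    (ha : ∀ x ∈ B, a ≤ #{s ∈ F | s • x ∈ A}) :
    a * stabMeasure G μ B ≤ μ ((F : Set G) • B ∩ A) := by
  calc a * stabMeasure G μ B ≤ ∫⁻ x in B, #{s ∈ F | s • x ∈ A} ∂(stabMeasure G μ) := by
        rw [← setLIntegral_const]
        exact setLIntegral_mono' hB ha
    _ = ∫⁻ y in A, stabWeight G y * #{s ∈ F | y ∈ s • B} ∂μ := by
        rw [setLIntegral_card_smul_mem _ F hB hA,
          setLIntegral_stabMeasure μ (measurable_card_mem_smul F hB) hA]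
    _ ≤ ∫⁻ y in A, ((F : Set G) • B).indicator 1 y ∂μ := by
        refine setLIntegral_mono' hA fun y _ => ?_
        by_cases hy : y ∈ (F : Set G) • B
        · rw [indicator_of_mem hy, Pi.one_apply]
          exact_mod_cast hF.stabWeight_mul_card_smul_le_one y
        · have hempty : ({s ∈ F | y ∈ s • B} : Finset G) = ∅ :=
            Finset.filter_eq_empty_iff.2 fun s hs ⟨b, hb, hsb⟩ => hy ⟨s, hs, b, hb, hsb⟩
          simp [hempty]
    _ = μ ((F : Set G) • B ∩ A) := by
        rw [lintegral_indicator_one (measurableSet_finset_smul F hB),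
          Measure.restrict_apply (measurableSet_finset_smul F hB)]

variable [MeasurableEq Y]

lemma measure_outer_boundary_le (μ : Measure Y) [SMulInvariantMeasure G Y μ] {K : Finset G}
    {V : Set Y} (hVinv : ∀ (g : G), ∀ x ∈ V, g • x ∈ V)
    (hVK : ∀ x ∈ V, (stabilizer G x : Set G) ⊆ K) (E F : Finset G) {B : Set Y}
    (hB : MeasurableSet B) :
    μ {x ∈ V | x ∉ (F : Set G) • B ∧ ∃ s ∈ E, s • x ∈ (F : Set G) • B} ≤
      #((E⁻¹ * K * F) \ F) * stabMeasure G μ B := by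
  let M : Finset G := (E⁻¹ * K * F) \ F
  have hcard := measurable_card_mem_smul M hB
  let f (y : Y) : ℝ≥0∞ := stabWeight G y * #{s ∈ M | y ∈ s • B}
  have hone : {x ∈ V | x ∉ (F : Set G) • B ∧ ∃ s ∈ E, s • x ∈ (F : Set G) • B} ⊆
      {x | 1 ≤ f x} := fun x ⟨hxV, hxF, hxE⟩ =>
    ENNReal.coe_le_coe.2 (one_le_stabWeight_mul_card_mem_smul hVinv hVK hxV hxF hxE) |>.trans_eq
      (by simp [f, M])
  have hf : Measurable f := by fun_prop
  calc _ ≤ μ {x | 1 ≤ f x} := measure_mono hone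
    _ ≤ ∫⁻ y, f y ∂μ := by simpa using mul_meas_ge_le_lintegral hf 1
    _ = ∫⁻ y in univ, #{s ∈ M | y ∈ s • B} ∂(stabMeasure G μ) := by
        rw [setLIntegral_stabMeasure μ hcard .univ, setLIntegral_univ]
    _ = #M * stabMeasure G μ B := by
        rw [← setLIntegral_card_smul_mem _ M hB .univ]
        simp

end QuasiTiling

section OrnsteinWeiss

variable {G : Type*} [Group G] [Countable G] {Y : Type*} [MulAction G Y] [MeasurableSpace Y]
  [MeasurableConstSMul G Y] [MeasurableSpace.CountablySeparated Y]

lemma mul_stabMeasure_iUnion_le (μ : Measure Y) [SMulInvariantMeasure G Y μ] {F : Finset G}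
    {Z : Set Y} {B : ℕ → Set Y} (hZ : MeasurableSet Z) (hB : ∀ n, MeasurableSet (B n))
    (hF : ∀ n, FixesOrMoves (F⁻¹ * F) (B n)) {a : ℝ≥0∞}
    (ha : ∀ n, ∀ x ∈ B n, a ≤ #{s ∈ F | s • x ∉ tiled Z (fun _ => F) B n}) :
    a * stabMeasure G μ (⋃ n, B n) ≤ μ (((F : Set G) • ⋃ n, B n) \ Z) := by
  have := measurableEq_of_countablySeparated Y
  have hW := measurableSet_tiled hZ (fun _ => F) hB
  calc a * stabMeasure G μ (⋃ n, B n) ≤ a * ∑' n, stabMeasure G μ (B n) := by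
        gcongr
        exact measure_iUnion_le B
    _ = ∑' n, a * stabMeasure G μ (B n) := ENNReal.tsum_mul_left.symm
    _ ≤ ∑' n, μ (((F : Set G) • B n) \ tiled Z (fun _ => F) B n) := ENNReal.tsum_le_tsum fun n =>
        mul_stabMeasure_le_of_fixesOrMoves μ (hF n) (hB n) (hW n).compl
          fun x hx => by convert ha n x hx
    _ ≤ μ (((F : Set G) • ⋃ n, B n) \ Z) := ENNReal.tsum_le_of_sum_range_le fun n => by
        rw [sum_measure_smul_sdiff_tiled μ hZ (fun _ => F) hB]
        exact measure_mono fun x hx => ⟨(tiled_const_subset Z F B n hx.1).resolve_left hx.2, hx.2⟩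

lemma exists_saturating_centres (μ : Measure Y) [IsFiniteMeasure μ] [SMulInvariantMeasure G Y μ]
    (F : Finset G) {Z D : Set Y} (hZ : MeasurableSet Z) (hD : MeasurableSet D) {ε : ℝ}
    (hε : ε ≤ 1) :
    ∃ B, MeasurableSet B ∧ B ⊆ D ∧
      (1 - ε) * #F * (stabMeasure G μ).real B ≤ μ.real (((F : Set G) • B) \ Z) ∧
      ∀ x ∈ D, ε * #F ≤ #{s ∈ F | s • x ∈ Z ∪ (F : Set G) • B} := by
  obtain ⟨C, hC, hCcov, hCF⟩ := exists_cover_fixesOrMoves (Y := Y) (F⁻¹ * F)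
  obtain ⟨B, hB⟩ := exists_greedy (fun _ => F) hZ
    (P := fun n W b => b = {x ∈ C n ∩ D | #{s ∈ F | s • x ∈ W} < ε * #F}) fun n W hW =>
      ⟨_, ((hC n).inter hD).inter
        (measurableSet_lt (measurable_card_smul_mem F hW) measurable_const), rfl⟩
  have hmem {n : ℕ} {x : Y} : x ∈ B n ↔
      (x ∈ C n ∧ x ∈ D) ∧ #{s ∈ F | s • x ∈ tiled Z (fun _ => F) B n} < ε * #F := by
    rw [(hB n).2]
    rfl
  refine ⟨⋃ n, B n, .iUnion fun n => (hB n).1, iUnion_subset fun n x hx => (hmem.1 hx).1.2, ?_,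
    fun x hx => ?_⟩
  · have hle := mul_stabMeasure_iUnion_le μ hZ (fun n => (hB n).1)
      (fun n => (hCF n).mono fun x hx => (hmem.1 hx).1.1) (a := ENNReal.ofReal ((1 - ε) * #F))
      fun n x hx => by
        rw [← ENNReal.ofReal_natCast]
        refine ENNReal.ofReal_le_ofReal ?_
        have hsum : (#{s ∈ F | s • x ∈ tiled Z (fun _ => F) B n} : ℝ) +
            #{s ∈ F | s • x ∉ tiled Z (fun _ => F) B n} = #F := by
          exact_mod_cast Finset.card_filter_add_card_filter_not (s := F) _
        linarith [(hmem.1 hx).2]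
    have hreal := ENNReal.toReal_mono (measure_ne_top _ _) hle
    rwa [ENNReal.toReal_mul, ENNReal.toReal_ofReal
      (mul_nonneg (sub_nonneg.2 hε) (Nat.cast_nonneg _))] at hreal
  · obtain ⟨n, hn⟩ := hCcov x
    by_cases hxn : x ∈ B n
    · have hall : ({s ∈ F | s • x ∈ Z ∪ (F : Set G) • ⋃ n, B n} : Finset G) = F :=
        Finset.filter_true_of_mem fun s hs =>
          .inr (smul_mem_smul hs (mem_iUnion.2 ⟨n, hxn⟩))
      rw [hall]
      exact mul_le_of_le_one_left (Nat.cast_nonneg _) hε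
    · refine (not_lt.1 fun h => hxn (hmem.2 ⟨⟨hn, hx⟩, h⟩)).trans (Nat.cast_le.2 ?_)
      exact Finset.card_le_card
        (Finset.monotone_filter_right F fun s _ hs => tiled_const_subset Z F B n hs)

lemma measureReal_boundary_tiled_le (μ : Measure Y) [IsProbabilityMeasure μ]
    [SMulInvariantMeasure G Y μ] {K : Finset G} {V : Set Y}
    (hVinv : ∀ (g : G), ∀ x ∈ V, g • x ∈ V) (hVK : ∀ x ∈ V, (stabilizer G x : Set G) ⊆ K)
    (E : ℕ → Finset G) {B : ℕ → Set Y} (hB : ∀ i, MeasurableSet (B i)) {δ : ℝ} (n : ℕ)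
    (hE : ∀ i < n, (#(((E n)⁻¹ * K * E i) \ E i) : ℝ) ≤ δ * #(E i)) :
    μ.real {x ∈ V | x ∉ tiled ∅ E B n ∧ ∃ s ∈ E n, s • x ∈ tiled ∅ E B n} ≤
      δ * ∑ i ∈ Finset.range n, #(E i) * (stabMeasure G μ).real (B i) := by
  have hsub : {x ∈ V | x ∉ tiled ∅ E B n ∧ ∃ s ∈ E n, s • x ∈ tiled ∅ E B n} ⊆
      ⋃ i ∈ Finset.range n,
        {x ∈ V | x ∉ (E i : Set G) • B i ∧ ∃ s ∈ E n, s • x ∈ (E i : Set G) • B i} := by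
    rintro x ⟨hxV, hxW, s, hs, hsx⟩
    simp only [tiled, empty_union, mem_iUnion, exists_prop, not_exists, not_and] at hxW hsx
    obtain ⟨i, hi, hsi⟩ := hsx
    exact mem_iUnion₂.2 ⟨i, Finset.mem_range.2 hi, hxV, hxW i hi, s, hs, hsi⟩
  have := measurableEq_of_countablySeparated Y
  rw [Finset.mul_sum]
  refine (measureReal_mono hsub (measure_ne_top _ _)).trans
    ((measureReal_biUnion_finset_le _ _).trans (Finset.sum_le_sum fun i hi => ?_))
  have hle := ENNReal.toReal_mono (by finiteness)
    (measure_outer_boundary_le μ hVinv hVK (E n) (E i) (hB i))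
  rw [ENNReal.toReal_mul, ENNReal.toReal_natCast] at hle
  refine hle.trans ?_
  rw [← mul_assoc]
  exact mul_le_mul_of_nonneg_right (hE i (Finset.mem_range.1 hi)) measureReal_nonneg

lemma pow_recursion_le {u : ℕ → ℝ} {k : ℕ} {ε c : ℝ} (hε : ε ≤ 1) (hc : 0 ≤ c) (h0 : u 0 ≤ 1)
    (h : ∀ n < k, u (n + 1) ≤ (1 - ε) * u n + ε * c) : u k ≤ (1 - ε) ^ k + c := by
  have hpow : ∀ n ≤ k, u n ≤ (1 - ε) ^ n + c := by
    intro n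
    induction n with
    | zero => exact fun _ => h0.trans (by simpa using hc)
    | succ n ih =>
      intro hn
      calc u (n + 1) ≤ (1 - ε) * ((1 - ε) ^ n + c) + ε * c := by
            grw [h n hn, ih (Nat.le_of_succ_le hn)]
            linarith
        _ = (1 - ε) ^ (n + 1) + c := by ring
  exact hpow k le_rfl

theorem exists_quasiTiling (μ : Measure Y) [IsProbabilityMeasure μ] [SMulInvariantMeasure G Y μ]
    {K : Finset G} {V : Set Y} (hV : MeasurableSet V) (hVinv : ∀ (g : G), ∀ x ∈ V, g • x ∈ V)
    (hVK : ∀ x ∈ V, (stabilizer G x : Set G) ⊆ K) (k : ℕ) {E : ℕ → Finset G} {D : ℕ → Set Y}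
    (hE : ∀ i < k, (E i).Nonempty) (hD : ∀ i, MeasurableSet (D i)) {ε δ : ℝ} (hε0 : 0 ≤ ε)
    (hε1 : ε < 1) (hδ : 0 ≤ δ) (hDδ : ∀ i < k, μ.real (D i)ᶜ ≤ δ)
    (hEE : ∀ j < k, ∀ i < j, (#(((E j)⁻¹ * K * E i) \ E i) : ℝ) ≤ δ * #(E i)) :
    ∃ B : ℕ → Set Y, (∀ i, MeasurableSet (B i)) ∧ (∀ i, B i ⊆ D i) ∧
      (1 - ε) * ∑ i ∈ Finset.range k, #(E i) * (stabMeasure G μ).real (B i) ≤ 1 ∧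
      μ.real (V \ tiled ∅ E B k) ≤ (1 - ε) ^ k + (δ + δ / (1 - ε)) := by
  obtain ⟨B, hB⟩ := exists_greedy (P := fun n W b => b ⊆ D n ∧
      (1 - ε) * #(E n) * (stabMeasure G μ).real b ≤ μ.real (((E n : Set G) • b) \ W) ∧
      ∀ x ∈ D n, ε * #(E n) ≤ #{s ∈ E n | s • x ∈ W ∪ (E n : Set G) • b}) E .empty
    fun n W hW => exists_saturating_centres μ (E n) hW (hD n) hε1.le
  have hBm (n : ℕ) : MeasurableSet (B n) := (hB n).1
  have hW := measurableSet_tiled .empty E hBm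
  have hsum := sum_card_mul_stabMeasure_le μ E hBm fun i => (hB i).2.2.1
  have hpos : 0 < 1 - ε := sub_pos.2 hε1
  have hbd (n : ℕ) (hn : n < k) :
      μ.real {x ∈ V | x ∉ tiled ∅ E B n ∧ ∃ s ∈ E n, s • x ∈ tiled ∅ E B n} ≤ δ / (1 - ε) := by
    refine (measureReal_boundary_tiled_le μ hVinv hVK E hBm n (hEE n hn)).trans ?_
    rw [div_eq_mul_one_div]
    gcongr
    exact (le_div_iff₀' hpos).2 (hsum n)
  refine ⟨B, hBm, fun n => (hB n).2.1, hsum k, ?_⟩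
  refine pow_recursion_le (u := fun n => μ.real (V \ tiled ∅ E B n)) hε1.le
    (add_nonneg hδ (div_nonneg hδ hpos.le)) measureReal_le_one fun n hn => ?_
  have hstep := measureReal_sdiff_le μ (hE n hn) hV hVinv (hD n) (hW n) (hW (n + 1))
    (tiled_subset_tiled_succ ∅ E B n) hε0 (by simpa only [tiled_succ] using (hB n).2.2.2)
  grw [hDδ n hn, hbd n hn] at hstep
  exact hstep

end OrnsteinWeiss

section Mark

/-- The cost of announcing an event with a code that reserves cost `a` for the alternative, that is
with an event of probability `1 - exp (-a)`. -/
noncomputable def markCost (a : ℝ) : ℝ := -Real.log (1 - Real.exp (-a))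

/-- The probability vector on `Option T` that gives probability `exp (-a)` to `none` and spreads the
rest uniformly on `T`, so that announcing `none` costs only `a`. -/
noncomputable def markWeight {T : Type*} [Fintype T] (a : ℝ) : Option T → ℝ
  | none => Real.exp (-a)
  | some _ => (1 - Real.exp (-a)) / Fintype.card T

variable {a : ℝ}

lemma one_sub_exp_neg_pos (ha : 0 < a) : 0 < 1 - Real.exp (-a) :=
  sub_pos.2 (Real.exp_lt_one_iff.2 (neg_neg_of_pos ha))

lemma markCost_nonneg (ha : 0 < a) : 0 ≤ markCost a :=
  neg_nonneg.2 (Real.log_nonpos (one_sub_exp_neg_pos ha).le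
    (sub_le_self _ (Real.exp_pos _).le))

variable {T : Type*} [Fintype T] [Nonempty T]

lemma markWeight_pos (ha : 0 < a) : ∀ o : Option T, 0 < markWeight a o
  | none => Real.exp_pos _
  | some _ => div_pos (one_sub_exp_neg_pos ha) (by exact_mod_cast Fintype.card_pos)

variable (T) in
lemma sum_markWeight (a : ℝ) : ∑ o : Option T, markWeight a o = 1 := by
  simp only [Fintype.sum_option, markWeight, Finset.sum_const, Finset.card_univ, nsmul_eq_mul]
  field_simp
  ring

lemma neg_log_markWeight_some (ha : 0 < a) (t : T) :
    -Real.log (markWeight a (some t)) = Real.log (Fintype.card T) + markCost a := by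
  rw [markWeight, Real.log_div (one_sub_exp_neg_pos ha).ne'
    (Nat.cast_ne_zero.2 Fintype.card_ne_zero), markCost]
  ring

lemma integral_neg_log_markWeight_le {Y : Type*} [MeasurableSpace Y] (ν : Measure Y)
    [IsFiniteMeasure ν] (hν : ν.real univ ≤ 1) [MeasurableSpace (Option T)]
    [MeasurableSingletonClass (Option T)] (ha : 0 < a) {f : Y → Option T} (hf : Measurable f)
    {B : Set Y} (hB : MeasurableSet B) (hfB : ∀ y, y ∉ B → f y = none) :
    ∫ y, -Real.log (markWeight a (f y)) ∂ν ≤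
      a + ν.real B * (Real.log (Fintype.card T) + markCost a) := by
  set c := Real.log (Fintype.card T) + markCost a
  have hc0 : 0 ≤ c := add_nonneg (Real.log_natCast_nonneg _) (markCost_nonneg ha)
  have hnone : -Real.log (markWeight a (none : Option T)) = a := by
    rw [markWeight, Real.log_exp, neg_neg]
  have hpt (y : Y) : -Real.log (markWeight a (f y)) ≤ a + B.indicator (fun _ => c) y := by
    by_cases hy : y ∈ B
    · rw [indicator_of_mem hy]
      rcases f y with _ | t
      · linarith
      · linarith [neg_log_markWeight_some ha t]
    · rw [indicator_of_notMem hy, hfB y hy, hnone, add_zero]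
  have hind : Integrable (B.indicator fun _ => c) ν := (integrable_const c).indicator hB
  calc ∫ y, -Real.log (markWeight a (f y)) ∂ν
      ≤ ∫ y, (a + B.indicator (fun _ => c) y) ∂ν :=
        integral_mono (integrable_comp_of_finite ν hf fun o => -Real.log (markWeight a o))
          ((integrable_const a).add hind) hpt
    _ = ν.real univ * a + ν.real B * c := by
        rw [integral_add (integrable_const a) hind, integral_indicator hB, integral_const,
          setIntegral_const, smul_eq_mul, smul_eq_mul]
    _ ≤ a + ν.real B * c := by linarith [mul_le_mul_of_nonneg_right hν ha.le]

end Mark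

section Factor

variable {G : Type*} [Group G] {Y : Type*} [MeasurableSpace Y] [MulAction G Y]
  [MeasurableConstSMul G Y] {α β : Type*} [Fintype α] [MeasurableSpace α]
  [MeasurableSingletonClass α] [Fintype β]

lemma entropy_orbitWord_factor_le (μ : Measure Y) [IsFiniteMeasure μ] {Q : Y → α}
    (hQ : Measurable Q) (K F : Finset G) (φ : (K → α) → β) :
    entropy μ (orbitWord F fun y => φ (orbitWord K Q y)) ≤ entropy μ (orbitWord (K * F) Q) := by
  have h := entropy_comp_le μ (measurable_orbitWord (K * F) hQ) fun ω (s : F) =>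
    φ fun g : K => ω ⟨g * s, Finset.mul_mem_mul g.2 s.2⟩
  simp only [orbitWord, mul_smul] at h
  exact h

lemma eventually_entropy_orbitWord_factor_le (μ : Measure Y) [IsFiniteMeasure μ] {Q : Y → α}
    (hQ : Measurable Q) {K : Finset G} (hK : 1 ∈ K) (φ : (K → α) → β) {v η : ℝ} (hv : 0 ≤ v)
    (hη : 0 < η) (hent : ∀ᶠ F in folner G, entropy μ (orbitWord F Q) ≤ v * #F) :
    ∀ᶠ F in folner G, entropy μ (orbitWord F fun y => φ (orbitWord K Q y)) ≤ (v + η) * #F := by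
  have hv1 : 0 < v + 1 := by positivity
  have hvη : v * (1 + η / (v + 1)) ≤ v + η := by
    have : v * (η / (v + 1)) ≤ η := by
      rw [mul_div_assoc', div_le_iff₀ hv1]
      nlinarith
    linarith
  filter_upwards [(tendsto_mul_left_folner hK).eventually hent,
    eventually_card_mul_le K (div_pos hη hv1)] with F hF hcard
  calc entropy μ (orbitWord F fun y => φ (orbitWord K Q y))
      ≤ entropy μ (orbitWord (K * F) Q) := entropy_orbitWord_factor_le μ hQ K F φ
    _ ≤ v * #(K * F) := hF
    _ ≤ v * ((1 + η / (v + 1)) * #F) := by gcongr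
    _ ≤ (v + η) * #F := by
        rw [← mul_assoc]
        gcongr

variable [MeasurableEq Y] [Countable G] [Infinite G]

lemma eventually_entropy_orbitWord_factor_le_integral (μ : Measure Y) [IsProbabilityMeasure μ]
    [SMulInvariantMeasure G Y μ] {Q : Y → α} (hQ : Measurable Q) {K : Finset G} (hK : 1 ∈ K)
    (φ : (K → α) → β) {q : α → ℝ} (hq : ∀ a, 0 < q a) (hq1 : ∑ a, q a ≤ 1) {η : ℝ}
    (hη : 0 < η) :
    ∀ᶠ F in folner G, entropy μ (orbitWord F fun y => φ (orbitWord K Q y)) ≤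
      (∫ y, -Real.log (q (Q y)) ∂(stabMeasure G μ) + η) * #F := by
  have hq_le (a : α) : q a ≤ 1 :=
    (Finset.single_le_sum (fun b _ => (hq b).le) (Finset.mem_univ a)).trans hq1
  have hint : 0 ≤ ∫ y, -Real.log (q (Q y)) ∂(stabMeasure G μ) :=
    integral_nonneg fun y => neg_nonneg.2 (Real.log_nonpos (hq _).le (hq_le _))
  have h := eventually_entropy_orbitWord_factor_le μ hQ hK φ (by positivity) (half_pos hη)
    (eventually_entropy_orbitWord_le μ hQ hq hq1 (half_pos hη))
  rwa [add_assoc, add_halves] at h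

end Factor

section Codebook

/-- A finite window in `G` with a finite set of words over the index set of a cover along it. Each
word names a member of the join of the cover over the window. -/
structure Codebook (G α : Type*) where
  shape : Finset G
  words : Finset (shape → α)

variable {G : Type*} [Group G] {Y : Type*} [MulAction G Y] {α : Type*}

namespace Codebook

/-- The union of the members of the join of the cover `U` which are named by the codebook. -/
def covered (x : Codebook G α) (U : α → Set Y) : Set Y :=
  {y | ∃ w ∈ x.words, ∀ s : x.shape, (s : G) • y ∈ U (w s)}

lemma covered_eq_biUnion (x : Codebook G α) (U : α → Set Y) :
    x.covered U = ⋃ w ∈ x.words, ⋂ s : x.shape, ((s : G) • ·) ⁻¹' U (w s) := by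
  ext y
  simp [covered]

/-- The codebook which over the window `{1}` names all members of the cover. -/
noncomputable def full (G α : Type*) [Group G] [Fintype α] : Codebook G α := ⟨{1}, Finset.univ⟩

lemma covered_full [Fintype α] {U : α → Set Y} (hU : ∀ y, ∃ i, y ∈ U i) :
    (full G α).covered U = univ := by
  refine eq_univ_of_forall fun y => ?_
  obtain ⟨i, hi⟩ := hU y
  refine ⟨fun _ => i, Finset.mem_univ _, fun s => ?_⟩
  rwa [Finset.mem_singleton.1 s.2, one_smul]

lemma card_words_full [Fintype α] : #(full G α).words = Fintype.card α := by
  simp [full]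

/-- All letters which a tiling named by the codebooks `x` can suggest at a point are read along this
window around the point. -/
noncomputable def decodeWindow {ι : Type*} [Fintype ι] (x : ι → Codebook G α) : Finset G :=
  insert 1 (Finset.univ.biUnion fun i => (x i).shape⁻¹)

lemma inv_mem_decodeWindow {ι : Type*} [Fintype ι] (x : ι → Codebook G α) {i : ι} {s : G}
    (hs : s ∈ (x i).shape) : s⁻¹ ∈ decodeWindow x :=
  Finset.mem_insert_of_mem
    (Finset.mem_biUnion.2 ⟨i, Finset.mem_univ i, Finset.inv_mem_inv hs⟩)

lemma exists_decode [Nonempty α] {ι : Type*} [Fintype ι] (x : ι → Codebook G α) (U : α → Set Y) :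
    ∃ φ : (decodeWindow x → ∀ i, Option (x i).words) → α, ∀ Q : Y → ∀ i, Option (x i).words,
      (∀ y i w, Q y i = some w → ∀ s : (x i).shape, (s : G) • y ∈ U (w.1 s)) →
      ∀ y i, y ∈ ((x i).shape : Set G) • {z | Q z i ≠ none} →
        y ∈ U (φ (orbitWord (decodeWindow x) Q y)) := by
  let suggests (ω : decodeWindow x → ∀ i, Option (x i).words) (j : α) : Prop :=
    ∃ (i : ι) (s : (x i).shape) (w : (x i).words),
      ω ⟨(s : G)⁻¹, inv_mem_decodeWindow x s.2⟩ i = some w ∧ w.1 s = j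
  refine ⟨fun ω => if h : ∃ j, suggests ω j then h.choose else Classical.arbitrary α,
    fun Q hQ y i hy => ?_⟩
  have hex : ∃ j, suggests (orbitWord (decodeWindow x) Q y) j := by
    obtain ⟨s, hs, z, hz, rfl⟩ := hy
    obtain ⟨w, hw⟩ := Option.ne_none_iff_exists'.1 hz
    refine ⟨w.1 ⟨s, hs⟩, i, ⟨s, hs⟩, w, ?_, rfl⟩
    simpa only [orbitWord, inv_smul_smul] using hw
  simp only [dif_pos hex]
  obtain ⟨i', s, w, hw, hws⟩ := hex.choose_spec
  rw [← hws]
  simpa only [smul_inv_smul] using hQ _ i' w hw s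

variable [MeasurableSpace Y] [MeasurableConstSMul G Y]

lemma measurableSet_covered (x : Codebook G α) {U : α → Set Y} (hU : ∀ i, MeasurableSet (U i)) :
    MeasurableSet (x.covered U) := by
  rw [covered_eq_biUnion]
  exact Finset.measurableSet_biUnion _ fun w _ => .iInter fun s =>
    measurable_const_smul (s : G) (hU (w s))

lemma exists_measurable_name (x : Codebook G α) [MeasurableSpace (Option x.words)] {U : α → Set Y}
    (hU : ∀ i, MeasurableSet (U i)) {B : Set Y} (hB : MeasurableSet B) (hBx : B ⊆ x.covered U) :
    ∃ f : Y → Option x.words, Measurable f ∧ (∀ y, f y = none ↔ y ∉ B) ∧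
      ∀ y w, f y = some w → ∀ s : x.shape, (s : G) • y ∈ U (w.1 s) := by
  obtain ⟨f, hf, hnone, hsome⟩ := exists_measurable_choice
    (A := fun w : x.words => B ∩ ⋂ s : x.shape, ((s : G) • ·) ⁻¹' U (w.1 s))
    fun w => hB.inter (.iInter fun s => measurable_const_smul (s : G) (hU _))
  refine ⟨f, hf, fun y => ?_, fun y w hw s => mem_iInter.1 (hsome y w hw).2 s⟩
  rw [hnone]
  refine ⟨fun h hy => ?_, fun hy w hw => hy hw.1⟩
  obtain ⟨w, hw, hyw⟩ := hBx hy
  exact h ⟨w, hw⟩ ⟨hy, mem_iInter.2 hyw⟩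

end Codebook

variable [MeasurableSpace Y] {ι : Type*} [Fintype ι]

lemma integral_neg_log_prod_markWeight_le (μ : Measure Y) [IsProbabilityMeasure μ]
    {T : ι → Type*} [∀ i, Fintype (T i)] [∀ i, Nonempty (T i)] [∀ i, MeasurableSpace (Option (T i))]
    [∀ i, MeasurableSingletonClass (Option (T i))] {a : ι → ℝ} (ha : ∀ i, 0 < a i)
    {Q : Y → ∀ i, Option (T i)} (hQ : Measurable Q) {B : ι → Set Y}
    (hB : ∀ i, MeasurableSet (B i)) (hQB : ∀ y i, y ∉ B i → Q y i = none) :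
    ∫ y, -Real.log (∏ i, markWeight (a i) (Q y i)) ∂(stabMeasure G μ) ≤
      ∑ i, (a i + (stabMeasure G μ).real (B i) *
        (Real.log (Fintype.card (T i)) + markCost (a i))) := by
  have hν : (stabMeasure G μ).real univ ≤ 1 := by
    rw [← probReal_univ (μ := μ)]
    exact ENNReal.toReal_mono (measure_ne_top μ univ) (stabMeasure_le μ univ)
  have hQi (i : ι) : Measurable fun y => Q y i := (measurable_pi_apply i).comp hQ
  simp only [fun y => Real.log_prod (s := Finset.univ) (f := fun i => markWeight (a i) (Q y i))
    fun i _ => (markWeight_pos (ha i) _).ne', ← Finset.sum_neg_distrib]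
  rw [integral_finsetSum _ fun i _ =>
    integrable_comp_of_finite _ (hQi i) fun o => -Real.log (markWeight (a i) o)]
  exact Finset.sum_le_sum fun i _ =>
    integral_neg_log_markWeight_le _ hν (ha i) (hQi i) (hB i) fun y => hQB y i

variable [MeasurableConstSMul G Y] [MeasurableEq Y] [Countable G] [Infinite G] [Fintype α]
  [Nonempty α] [MeasurableSpace α] {U : α → Set Y}

theorem exists_refinement_of_tiling (μ : Measure Y) [IsProbabilityMeasure μ]
    [SMulInvariantMeasure G Y μ] (hU : ∀ i, MeasurableSet (U i)) {x : ι → Codebook G α}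
    (hx : ∀ i, (x i).words.Nonempty) {B : ι → Set Y} (hB : ∀ i, MeasurableSet (B i))
    (hBx : ∀ i, B i ⊆ (x i).covered U) (hcov : ⋃ i, ((x i).shape : Set G) • B i = univ)
    {a : ι → ℝ} (ha : ∀ i, 0 < a i) {η : ℝ} (hη : 0 < η) :
    ∃ p : Y → α, Measurable p ∧ (∀ y, y ∈ U (p y)) ∧
      ∀ᶠ F in folner G, entropy μ (orbitWord F p) ≤
        (∑ i, (a i + (stabMeasure G μ).real (B i) *
          (Real.log #(x i).words + markCost (a i))) + η) * #F := by
  have hne (i : ι) : Nonempty (x i).words := (hx i).to_subtype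
  let _ (i : ι) : MeasurableSpace (Option (x i).words) := ⊤
  have (i : ι) : MeasurableSingletonClass (Option (x i).words) :=
    ⟨fun _ => MeasurableSpace.measurableSet_top⟩
  choose f hf hnone hsome using fun i => (x i).exists_measurable_name hU (hB i) (hBx i)
  obtain ⟨φ, hφ⟩ := Codebook.exists_decode x U
  let Q (y : Y) (i : ι) : Option (x i).words := f i y
  have hQ : Measurable Q := measurable_pi_iff.2 hf
  have hK : 1 ∈ Codebook.decodeWindow x := Finset.mem_insert_self _ _
  refine ⟨fun y => φ (orbitWord _ Q y), Measurable.of_discrete.comp (measurable_orbitWord _ hQ),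
    fun y => ?_, ?_⟩
  · obtain ⟨i, hi⟩ := mem_iUnion.1 (hcov.superset (mem_univ y))
    refine hφ Q (fun z i w hw => hsome i z w hw) y i (Set.smul_subset_smul_left ?_ hi)
    exact fun z hz h => (hnone i z).1 h hz
  · have hcost := integral_neg_log_prod_markWeight_le (G := G) μ ha hQ hB
      fun y i => (hnone i y).2
    simp only [Fintype.card_coe] at hcost
    have hsum : ∑ q : ∀ i, Option (x i).words, ∏ i, markWeight (a i) (q i) = 1 := by
      rw [← Fintype.piFinset_univ, ← Finset.prod_univ_sum]
      exact Finset.prod_eq_one fun i _ => sum_markWeight _ _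
    filter_upwards [eventually_entropy_orbitWord_factor_le_integral μ hQ hK φ
      (fun q => Finset.prod_pos fun i _ => markWeight_pos (ha i) (q i)) hsum.le hη] with F hF
    exact hF.trans (by gcongr)

end Codebook

section Refinement

variable {G : Type*} [Group G] {Y : Type*} [MulAction G Y] [MeasurableSpace Y] {α : Type*}

/-- The codebook names, at exponential rate at most `h`, enough members of the join of the cover `U`
to cover all but a part of measure `δ`. -/
structure Codebook.Describes (x : Codebook G α) (μ : Measure Y) (U : α → Set Y) (h δ : ℝ) :
    Prop where
  log_card_words_le : Real.log #x.words ≤ h * #x.shape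
  measureReal_compl_le : μ.real (x.covered U)ᶜ ≤ δ

lemma Codebook.Describes.nonempty_words {μ : Measure Y} [IsProbabilityMeasure μ]
    {x : Codebook G α} {U : α → Set Y} {h δ : ℝ} (hx : x.Describes μ U h δ) (hδ : δ < 1) :
    x.words.Nonempty := by
  by_contra hempty
  have hcov : x.covered U = ∅ := by
    ext y
    simp [Codebook.covered, Finset.not_nonempty_iff_eq_empty.1 hempty]
  have hle := hx.measureReal_compl_le
  rw [hcov, compl_empty, probReal_univ] at hle
  linarith

lemma exists_seq_codebook [Infinite G] (μ : Measure Y) {U : α → Set Y} {h δ : ℝ} (hδ : 0 < δ)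
    (hx : ∃ᶠ F in folner G, ∃ x : Codebook G α, x.shape = F ∧ x.Describes μ U h δ)
    (K : Finset G) (n k : ℕ) :
    ∃ x : ℕ → Codebook G α,
      (∀ i, (x i).shape.Nonempty ∧ n ≤ #(x i).shape ∧ (x i).Describes μ U h δ) ∧
      ∀ j < k, ∀ i < j,
        (#(((x j).shape⁻¹ * K * (x i).shape) \ (x i).shape) : ℝ) ≤ δ * #(x i).shape := by
  obtain ⟨f, hf, hff⟩ := exists_seq_of_forall_finset_exists
    (fun x : Codebook G α => x.shape.Nonempty ∧ n ≤ #x.shape ∧ x.Describes μ U h δ)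
    (fun x y => (#((x.shape⁻¹ * K * y.shape) \ y.shape) : ℝ) ≤ δ * #y.shape) fun s _ => by
      have hinv : ∀ᶠ F in folner G, ∀ x ∈ s, (#((x.shape⁻¹ * K * F) \ F) : ℝ) ≤ δ * #F :=
        (Filter.eventually_all_finset s).2 fun x _ => eventually_card_mul_sdiff_le _ hδ
      obtain ⟨F, ⟨y, rfl, hy⟩, hne, hn, hyinv⟩ := (hx.and_eventually
        (eventually_nonempty_folner.and
          ((tendsto_card_folner.eventually_ge_atTop n).and hinv))).exists
      exact ⟨y, ⟨hne, hn, hy⟩, hyinv⟩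
  -- The sequence is reversed because a quasi-tiling places its most invariant shapes first.
  exact ⟨fun i => f (k - 1 - i), fun i => hf _, fun j hj i hij => hff _ _ (by omega)⟩

lemma stabMeasure_real_compl_le (μ : Measure Y) [IsFiniteMeasure μ] {V Z : Set Y} {a b : ℝ}
    (ha : (stabMeasure G μ).real Vᶜ ≤ a) (hb : μ.real (V \ Z) ≤ b) :
    (stabMeasure G μ).real Zᶜ ≤ a + b := by
  have hsub : Zᶜ ⊆ Vᶜ ∪ V \ Z := fun y hy => by
    by_cases h : y ∈ V
    exacts [.inr ⟨h, hy⟩, .inl h]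
  calc (stabMeasure G μ).real Zᶜ
      ≤ (stabMeasure G μ).real Vᶜ + (stabMeasure G μ).real (V \ Z) :=
        (measureReal_mono hsub).trans (measureReal_union_le _ _)
    _ ≤ a + b := add_le_add ha ((ENNReal.toReal_mono (measure_ne_top μ _)
        (stabMeasure_le μ _)).trans hb)

variable [MeasurableConstSMul G Y] [MeasurableSpace.CountablySeparated Y] [Countable G]
  [Infinite G]

lemma exists_codebook_tiling (μ : Measure Y) [IsProbabilityMeasure μ] [SMulInvariantMeasure G Y μ]
    {U : α → Set Y} (hU : ∀ i, MeasurableSet (U i)) {h : ℝ}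
    (hx : ∀ δ > 0, ∃ᶠ F in folner G, ∃ x : Codebook G α, x.shape = F ∧ x.Describes μ U h δ)
    {ε θ : ℝ} (hε0 : 0 < ε) (hε : ε ≤ 1 / 2) (hθ : 0 < θ) (hθ1 : θ ≤ 1) :
    ∃ k, ∀ n, ∃ (x : ℕ → Codebook G α) (B : ℕ → Set Y),
      (∀ i, (x i).words.Nonempty ∧ n ≤ #(x i).shape ∧
        Real.log #(x i).words ≤ h * #(x i).shape) ∧
      (∀ i, MeasurableSet (B i)) ∧ (∀ i, B i ⊆ (x i).covered U) ∧
      (1 - ε) * ∑ i ∈ Finset.range k, #(x i).shape * (stabMeasure G μ).real (B i) ≤ 1 ∧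
      (stabMeasure G μ).real (tiled ∅ (fun i => (x i).shape) B k)ᶜ ≤ θ := by
  have := measurableEq_of_countablySeparated Y
  obtain ⟨K, V, hV, hVinv, hVK, hVθ⟩ := exists_invariant_stabilizer_subset (G := G) μ
    (c := ENNReal.ofReal (θ / 2)) (by simpa using hθ)
  obtain ⟨k, hk⟩ := exists_pow_lt_of_lt_one (by positivity : 0 < θ / 4) (by linarith : 1 - ε < 1)
  refine ⟨k, fun n => ?_⟩
  have hδ : 0 < θ / 12 := by positivity
  obtain ⟨x, hx, hxx⟩ := exists_seq_codebook μ hδ (hx _ hδ) K n k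
  obtain ⟨B, hB, hBx, hsum, hrest⟩ := exists_quasiTiling μ hV hVinv hVK k
    (E := fun i => (x i).shape) (fun i _ => (hx i).1) (fun i => (x i).measurableSet_covered hU)
    hε0.le (by linarith) hδ.le (fun i _ => (hx i).2.2.measureReal_compl_le) hxx
  refine ⟨x, B, fun i => ⟨(hx i).2.2.nonempty_words (by linarith), (hx i).2.1,
    (hx i).2.2.log_card_words_le⟩, hB, hBx, hsum, ?_⟩
  have hδε : θ / 12 / (1 - ε) ≤ θ / 6 := by
    rw [div_le_iff₀ (by linarith)]
    nlinarith
  rw [← add_halves θ]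
  exact stabMeasure_real_compl_le μ
    (ENNReal.toReal_le_of_le_ofReal (by positivity) hVθ) (hrest.trans (by linarith))

variable [Fintype α] [Nonempty α] [MeasurableSpace α]

lemma exists_refinement_of_partial_tiling (μ : Measure Y) [IsProbabilityMeasure μ]
    [SMulInvariantMeasure G Y μ] {U : α → Set Y} (hU : ∀ i, MeasurableSet (U i))
    (hcov : ∀ y, ∃ i, y ∈ U i) {x : ℕ → Codebook G α} (hx : ∀ i, (x i).words.Nonempty)
    {B : ℕ → Set Y} (hB : ∀ i, MeasurableSet (B i)) (hBx : ∀ i, B i ⊆ (x i).covered U) (k : ℕ)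
    {a b η : ℝ} (ha : 0 < a) (hb : 0 < b) (hη : 0 < η) :
    ∃ p : Y → α, Measurable p ∧ (∀ y, y ∈ U (p y)) ∧
      ∀ᶠ F in folner G, entropy μ (orbitWord F p) ≤
        (b + (stabMeasure G μ).real (tiled ∅ (fun i => (x i).shape) B k)ᶜ *
            (Real.log (Fintype.card α) + markCost b) +
          ∑ i ∈ Finset.range k, (a + (stabMeasure G μ).real (B i) *
            (Real.log #(x i).words + markCost a)) + η) * #F := by
  have := measurableEq_of_countablySeparated Y
  set Z := tiled ∅ (fun i => (x i).shape) B k with hZ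
  have hZm : MeasurableSet Z := measurableSet_tiled .empty _ hB k
  let x' (o : Option (Fin k)) : Codebook G α := o.elim (.full G α) fun i => x i
  let B' (o : Option (Fin k)) : Set Y := o.elim Zᶜ fun i => B i
  have htile : ⋃ o, ((x' o).shape : Set G) • B' o = univ := by
    have hsplit : ⋃ i : Fin k, ((x i).shape : Set G) • B i = Z := by
      ext y
      simp [hZ, tiled, Fin.exists_iff]
    rw [iUnion_option]
    simp only [x', B', Option.elim, Codebook.full, Finset.coe_singleton, singleton_smul, one_smul,
      hsplit, compl_union_self]
  have h := exists_refinement_of_tiling μ hU (x := x') (B := B')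
    (a := fun o => o.elim b fun _ => a) (η := η)
    (Option.forall.2 ⟨Finset.univ_nonempty, fun i => hx i⟩)
    (Option.forall.2 ⟨hZm.compl, fun i => hB i⟩)
    (Option.forall.2 ⟨(subset_univ _).trans (Codebook.covered_full hcov).superset,
      fun i => hBx i⟩)
    htile (Option.forall.2 ⟨hb, fun _ => ha⟩) hη
  simpa only [x', B', Fintype.sum_option, Option.elim, Codebook.card_words_full,
    Fin.sum_univ_eq_sum_range fun i => a + (stabMeasure G μ).real (B i) *
      (Real.log #(x i).words + markCost a)] using h

lemma sum_tile_cost_le {k : ℕ} {ℓ N b : ℕ → ℝ} {h ε c : ℝ} (hh : 0 ≤ h) (hε0 : 0 < ε)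
    (hε : ε ≤ 1 / 2) (hb : ∀ i, 0 ≤ b i) (hℓ : ∀ i, ℓ i ≤ (h + ε) * N i) (hc : ∀ i, c ≤ ε * N i)
    (hsum : (1 - ε) * ∑ i ∈ Finset.range k, N i * b i ≤ 1) :
    ∑ i ∈ Finset.range k, (ε / (k + 1) + b i * (ℓ i + c)) ≤ h + (5 + 2 * h) * ε := by
  have hterm (i : ℕ) : b i * (ℓ i + c) ≤ (h + 2 * ε) * (N i * b i) := by
    have hi : ℓ i + c ≤ (h + 2 * ε) * N i := by linarith [hℓ i, hc i]
    linarith [mul_le_mul_of_nonneg_left hi (hb i)]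
  have hS : ∑ i ∈ Finset.range k, N i * b i ≤ 1 + 2 * ε := by
    nlinarith
  have hconst : (k : ℝ) * (ε / (k + 1)) ≤ ε := by
    rw [mul_div_assoc', div_le_iff₀ (by positivity)]
    nlinarith
  calc ∑ i ∈ Finset.range k, (ε / (k + 1) + b i * (ℓ i + c))
      ≤ k * (ε / (k + 1)) + (h + 2 * ε) * ∑ i ∈ Finset.range k, N i * b i := by
        rw [Finset.sum_add_distrib, Finset.sum_const, Finset.card_range, nsmul_eq_mul,
          Finset.mul_sum]
        gcongr _ + ∑ i ∈ _, ?_ with i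
        exact hterm i
    _ ≤ ε + (h + 2 * ε) * (1 + 2 * ε) := by gcongr
    _ ≤ h + (5 + 2 * h) * ε := by nlinarith

lemma exists_pos_le_and_mul_le {C b c : ℝ} (hC : 0 ≤ C) (hb : 0 < b) (hc : 0 < c) :
    ∃ ε : ℝ, 0 < ε ∧ ε ≤ b ∧ C * ε ≤ c := by
  obtain ⟨ε, hε, hlt⟩ := exists_pos_mul_lt hc C
  exact ⟨min b ε, lt_min hb hε, min_le_left _ _,
    (mul_le_mul_of_nonneg_left (min_le_right _ _) hC).trans hlt.le⟩

theorem exists_refinement_of_countablySeparated (μ : Measure Y) [IsProbabilityMeasure μ]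
    [SMulInvariantMeasure G Y μ] {U : α → Set Y} (hU : ∀ i, MeasurableSet (U i))
    (hcov : ∀ y, ∃ i, y ∈ U i) {h : ℝ} (hh : 0 ≤ h)
    (hx : ∀ ε > 0, ∀ δ > 0,
      ∃ᶠ F in folner G, ∃ x : Codebook G α, x.shape = F ∧ x.Describes μ U (h + ε) δ)
    {η : ℝ} (hη : 0 < η) :
    ∃ p : Y → α, Measurable p ∧ (∀ y, y ∈ U (p y)) ∧
      ∀ᶠ F in folner G, entropy μ (orbitWord F p) ≤ (h + η) * #F := by
  obtain ⟨ε, hε0, hε, hεη⟩ := exists_pos_le_and_mul_le (by positivity : 0 ≤ 8 + 2 * h)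
    one_half_pos hη
  set L := Real.log (Fintype.card α) + markCost ε
  have hL : 0 ≤ L := add_nonneg (Real.log_natCast_nonneg _) (markCost_nonneg hε0)
  obtain ⟨θ, hθ, hθ1, hθL⟩ := exists_pos_le_and_mul_le hL one_pos hε0
  obtain ⟨k, hk⟩ := exists_codebook_tiling μ hU (hx ε hε0) hε0 hε hθ hθ1
  have hεk : 0 < ε / (k + 1) := by positivity
  obtain ⟨n, hn⟩ := exists_nat_ge (markCost (ε / (k + 1)) / ε)
  obtain ⟨x, B, hxB, hB, hBx, hsum, hrest⟩ := hk n
  have hn (i : ℕ) : markCost (ε / (k + 1)) ≤ ε * #(x i).shape :=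
    (div_le_iff₀' hε0).1 (hn.trans (by exact_mod_cast (hxB i).2.1))
  obtain ⟨p, hp, hpU, hent⟩ := exists_refinement_of_partial_tiling μ hU hcov
    (fun i => (hxB i).1) hB hBx k hεk hε0 hε0
  refine ⟨p, hp, hpU, hent.mono fun F hF => hF.trans ?_⟩
  have hcost := sum_tile_cost_le hh hε0 hε (fun i => measureReal_nonneg) (fun i => (hxB i).2.2) hn
    hsum
  refine mul_le_mul_of_nonneg_right ?_ (Nat.cast_nonneg _)
  linarith [mul_le_mul_of_nonneg_left hrest hL]

end Refinement

section Limits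

lemma div_card_nonneg {ι : Type*} {ψ : Finset ι → ℝ} (h0 : ∀ F, 0 ≤ ψ F) (F : Finset ι) :
    0 ≤ ψ F / #F :=
  div_nonneg (h0 F) (Nat.cast_nonneg _)

variable {G : Type*} [Group G] {ψ : Finset G → ℝ} {C c : ℝ}

lemma invLimsup_nonneg (h0 : ∀ F, 0 ≤ ψ F) : 0 ≤ invLimsup ψ :=
  Real.iInf_nonneg fun _ => Real.iInf_nonneg fun _ => Real.sSup_nonneg <|
    forall_mem_image.2 fun F _ => div_card_nonneg h0 F

lemma invLimsup_le (h0 : ∀ F, 0 ≤ ψ F) (hC0 : 0 ≤ C) (hC : ∀ᶠ F in folner G, ψ F ≤ C * #F) :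
    invLimsup ψ ≤ C := by
  obtain ⟨⟨K, δ⟩, hδ, hKδ⟩ := hasBasis_folner.eventually_iff.1 hC
  have hsup (K : Finset G) (δ : {d : ℝ // 0 < d}) :
      0 ≤ sSup ((fun F : Finset G => ψ F / #F) '' {F | FolnerInv K δ.1 F}) :=
    Real.sSup_nonneg (forall_mem_image.2 fun F _ => div_card_nonneg h0 F)
  refine (ciInf_le ⟨0, ?_⟩ K).trans ((ciInf_le ⟨0, ?_⟩ ⟨δ, hδ⟩).trans (Real.sSup_le ?_ hC0))
  · exact forall_mem_range.2 fun K => Real.iInf_nonneg (hsup K)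
  · exact forall_mem_range.2 (hsup K)
  · exact forall_mem_image.2 fun F hF => div_le_of_le_mul₀ (Nat.cast_nonneg _) hC0 (hKδ hF)

lemma sInf_div_card_le (hG : FolnerAmenable G) (h0 : ∀ F, 0 ≤ ψ F)
    (hC : ∀ᶠ F in folner G, ψ F ≤ C * #F) (K : Finset G) (δ : {d : ℝ // 0 < d}) :
    sInf ((fun F : Finset G => ψ F / #F) '' {F | FolnerInv K δ.1 F}) ≤ C := by
  have := neBot_folner hG
  obtain ⟨F, hFC, hF⟩ := (hC.and (eventually_folnerInv K δ.2)).exists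
  refine csInf_le_of_le ⟨0, forall_mem_image.2 fun F _ => div_card_nonneg h0 F⟩ ⟨F, hF, rfl⟩ ?_
  exact (div_le_iff₀ (by exact_mod_cast hF.1.card_pos)).2 hFC

lemma invLiminf_nonneg (h0 : ∀ F, 0 ≤ ψ F) : 0 ≤ invLiminf ψ :=
  Real.iSup_nonneg fun _ => Real.iSup_nonneg fun _ => Real.sInf_nonneg <|
    forall_mem_image.2 fun F _ => div_card_nonneg h0 F

lemma invLiminf_le (hG : FolnerAmenable G) (h0 : ∀ F, 0 ≤ ψ F)
    (hC : ∀ᶠ F in folner G, ψ F ≤ C * #F) : invLiminf ψ ≤ C :=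
  have : Nonempty {d : ℝ // 0 < d} := ⟨⟨1, one_pos⟩⟩
  ciSup_le fun K => ciSup_le (sInf_div_card_le hG h0 hC K)

lemma le_invLiminf (hG : FolnerAmenable G) (h0 : ∀ F, 0 ≤ ψ F)
    (hC : ∀ᶠ F in folner G, ψ F ≤ C * #F) (hc : ∀ᶠ F in folner G, c * #F ≤ ψ F) :
    c ≤ invLiminf ψ := by
  have : Nonempty {d : ℝ // 0 < d} := ⟨⟨1, one_pos⟩⟩
  have hle := sInf_div_card_le hG h0 hC
  obtain ⟨⟨K, δ⟩, hδ, hKδ⟩ := hasBasis_folner.eventually_iff.1 hc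
  refine le_trans ?_ (le_ciSup_of_le ⟨C, ?_⟩ K (le_ciSup ⟨C, ?_⟩ ⟨δ, hδ⟩))
  · refine le_csInf (Set.Nonempty.image _ (hG K δ hδ)) (forall_mem_image.2 fun F hF => ?_)
    exact (le_div_iff₀ (by exact_mod_cast hF.1.card_pos)).2 (hKδ hF)
  · exact forall_mem_range.2 fun K => ciSup_le (hle K)
  · exact forall_mem_range.2 (hle K)

lemma frequently_le_of_invLiminf_lt (hG : FolnerAmenable G) (h0 : ∀ F, 0 ≤ ψ F)
    (hC : ∀ᶠ F in folner G, ψ F ≤ C * #F) (hc : invLiminf ψ < c) :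
    ∃ᶠ F in folner G, ψ F ≤ c * #F := fun h =>
  hc.not_ge (le_invLiminf hG h0 hC (h.mono fun _ hF => (not_le.1 hF).le))

end Limits

section CoverNumbers

variable {G X : Type*} [Group G] [MulAction G X] {m : ℕ} {U : Fin m → Set X}

lemma subset_biUnion_join (hUcov : (⋃ i, U i) = univ) (F : Finset G) (D : Set X) :
    D ⊆ ⋃ f ∈ (Finset.univ : Finset (F → Fin m)), ⋂ s : F, (fun x => (s : G) • x) ⁻¹' U (f s) := by
  intro x _
  have hmem (s : F) : ∃ i, (s : G) • x ∈ U i := mem_iUnion.1 (hUcov.superset (mem_univ _))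
  choose f hf using hmem
  exact mem_iUnion₂.2 ⟨f, Finset.mem_univ _, mem_iInter.2 hf⟩

lemma coverNumJoin_le_pow (hUcov : (⋃ i, U i) = univ) (F : Finset G) (D : Set X) :
    coverNumJoin U F D ≤ m ^ #F :=
  Nat.sInf_le ⟨Finset.univ, by simp, subset_biUnion_join hUcov F D⟩

lemma exists_codebook_card_eq_coverNumJoin (hUcov : (⋃ i, U i) = univ) (F : Finset G)
    (D : Set X) : ∃ x : Codebook G (Fin m),
      x.shape = F ∧ #x.words = coverNumJoin U F D ∧ D ⊆ x.covered U := by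
  have hne : {n : ℕ | ∃ t : Finset (F → Fin m), #t = n ∧
      D ⊆ ⋃ f ∈ t, ⋂ s : F, (fun x => (s : G) • x) ⁻¹' U (f s)}.Nonempty :=
    ⟨_, Finset.univ, rfl, subset_biUnion_join hUcov F D⟩
  obtain ⟨t, ht, hDt⟩ := Nat.sInf_mem hne
  exact ⟨⟨F, t⟩, rfl, ht, hDt.trans (Codebook.covered_eq_biUnion ⟨F, t⟩ U).superset⟩

variable [MeasurableSpace X] (μ : Measure X)

lemma hLowerC_nonneg : 0 ≤ hLowerC G μ U :=
  Real.iSup_nonneg fun _ => invLiminf_nonneg fun _ => Real.log_natCast_nonneg _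

variable [IsProbabilityMeasure μ]

lemma coverNumJoin_univ_mem {δ : ℝ} (hδ : 0 < δ) (F : Finset G) :
    coverNumJoin U F univ ∈ {n : ℕ | ∃ D : Set X, MeasurableSet D ∧ 1 - δ ≤ (μ D).toReal ∧
      n = coverNumJoin U F D} :=
  ⟨univ, .univ, by simpa using hδ.le, rfl⟩

lemma log_NdeltaJoin_le (hUcov : (⋃ i, U i) = univ) {δ : ℝ} (hδ : 0 < δ) (F : Finset G) :
    Real.log (NdeltaJoin μ U δ F) ≤ Real.log m * #F := by
  rcases Nat.eq_zero_or_pos (NdeltaJoin μ U δ F) with h | h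
  · rw [h, Nat.cast_zero, Real.log_zero]
    positivity
  · have hpow : NdeltaJoin μ U δ F ≤ m ^ #F :=
      (Nat.sInf_le (coverNumJoin_univ_mem μ hδ F)).trans (coverNumJoin_le_pow hUcov F _)
    rw [mul_comm, ← Real.log_pow]
    exact Real.log_le_log (by exact_mod_cast h) (by exact_mod_cast hpow)

lemma exists_codebook_card_eq_NdeltaJoin (hUcov : (⋃ i, U i) = univ) {δ : ℝ} (hδ : 0 < δ)
    (F : Finset G) : ∃ x : Codebook G (Fin m),
      x.shape = F ∧ #x.words = NdeltaJoin μ U δ F ∧ μ.real (x.covered U)ᶜ ≤ δ := by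
  obtain ⟨D, hD, hDδ, hN⟩ := Nat.sInf_mem ⟨_, coverNumJoin_univ_mem (U := U) μ hδ F⟩
  obtain ⟨x, hxF, hx, hDx⟩ := exists_codebook_card_eq_coverNumJoin hUcov F D
  refine ⟨x, hxF, hx.trans hN.symm, (measureReal_mono (compl_subset_compl.2 hDx)).trans ?_⟩
  rw [probReal_compl_eq_one_sub hD]
  exact sub_le_comm.1 hDδ

lemma invLiminf_log_NdeltaJoin_le_hLowerC (hG : FolnerAmenable G) (hUcov : (⋃ i, U i) = univ)
    {δ : ℝ} (hδ : 0 < δ) :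
    invLiminf (fun F : Finset G => Real.log (NdeltaJoin μ U δ F)) ≤ hLowerC G μ U := by
  refine le_ciSup (f := fun δ : {d : ℝ // 0 < d} =>
    invLiminf (fun F : Finset G => Real.log (NdeltaJoin μ U δ.1 F))) ⟨Real.log m, ?_⟩ ⟨δ, hδ⟩
  exact forall_mem_range.2 fun δ => invLiminf_le hG (fun _ => Real.log_natCast_nonneg _)
    (.of_forall (log_NdeltaJoin_le μ hUcov δ.2))

theorem frequently_exists_describes (hG : FolnerAmenable G) (hUcov : (⋃ i, U i) = univ)
    {ε δ : ℝ} (hε : 0 < ε) (hδ : 0 < δ) :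
    ∃ᶠ F in folner G, ∃ x : Codebook G (Fin m),
      x.shape = F ∧ x.Describes μ U (hLowerC G μ U + ε) δ := by
  refine (frequently_le_of_invLiminf_lt hG (fun _ => Real.log_natCast_nonneg _)
    (.of_forall (log_NdeltaJoin_le μ hUcov hδ))
    ((invLiminf_log_NdeltaJoin_le_hLowerC μ hG hUcov hδ).trans_lt
      (lt_add_of_pos_right _ hε))).mono fun F hF => ?_
  obtain ⟨x, rfl, hx, hxδ⟩ := exists_codebook_card_eq_NdeltaJoin μ hUcov hδ F
  exact ⟨x, rfl, by rwa [hx], hxδ⟩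

lemma HJoin_nonneg {k : ℕ} (P : Fin k → Set X) (F : Finset G) : 0 ≤ HJoin μ P F :=
  Finset.sum_nonneg fun _ _ => Real.negMulLog_nonneg ENNReal.toReal_nonneg measureReal_le_one

lemma hPlus_le {r : ℕ} {P : Fin r → Set X} (hP : IsMeasPartition P)
    (hPU : ∀ a, ∃ i, P a ⊆ U i) : hPlus G μ U ≤ invLimsup (fun F : Finset G => HJoin μ P F) := by
  refine csInf_le ⟨0, ?_⟩ ⟨r, P, hP, hPU, rfl⟩
  rintro _ ⟨r, P, -, -, rfl⟩
  exact invLimsup_nonneg fun F => HJoin_nonneg μ P F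

end CoverNumbers

section Shift

/-- The full shift over `G` with alphabet `α`, on which `G` acts by right translation of the
argument. -/
def Shift (G α : Type*) : Type _ := G → α

variable {G α : Type*}

instance [Group G] : MulAction G (Shift G α) where
  smul s y := fun g => y (g * s)
  one_smul y := funext fun g => congrArg y (mul_one g)
  mul_smul s t y := funext fun g => congrArg y (mul_assoc g s t).symm

instance [MeasurableSpace α] : MeasurableSpace (Shift G α) :=
  inferInstanceAs (MeasurableSpace (G → α))

instance [MeasurableSpace α] [Countable G] [StandardBorelSpace α] :
    MeasurableSpace.CountablySeparated (Shift G α) :=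
  inferInstanceAs (MeasurableSpace.CountablySeparated (G → α))

instance [MeasurableSpace α] [Group G] : MeasurableConstSMul G (Shift G α) where
  measurable_const_smul s := measurable_pi_iff.2 fun g => measurable_pi_apply (g * s)

/-- The set of configurations whose letter at the identity lies in `A`. -/
def cylinder (G : Type*) [Group G] (A : Set α) : Set (Shift G α) := {y | y 1 ∈ A}

lemma measurableSet_cylinder [Group G] [MeasurableSpace α] {A : Set α} (hA : MeasurableSet A) :
    MeasurableSet (cylinder G A) :=
  measurable_pi_apply (X := fun _ : G => α) 1 hA

variable {X : Type*} [Group G] [MulAction G X]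

/-- The itinerary of a point under the labelling `c` of the space by letters. -/
def itinerary (G : Type*) {X : Type*} [Group G] [MulAction G X] (c : X → α) (x : X) : Shift G α :=
  fun g => c (g • x)

lemma itinerary_smul (c : X → α) (s : G) (x : X) : itinerary G c (s • x) = s • itinerary G c x :=
  funext fun g => congrArg c (smul_smul g s x)

lemma itinerary_preimage_cylinder (c : X → α) (A : Set α) :
    itinerary G c ⁻¹' cylinder G A = c ⁻¹' A := by
  ext x
  simp [cylinder, itinerary]

lemma measurable_itinerary [MeasurableSpace X] [MeasurableConstSMul G X] [MeasurableSpace α]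
    {c : X → α} (hc : Measurable c) : Measurable (itinerary G c) :=
  measurable_pi_iff.2 fun g => hc.comp (measurable_const_smul g)

end Shift

section CoverCode

variable {X α : Type*}

/-- The code of a point records which members of the cover `U` contain it. -/
noncomputable def coverCode (U : α → Set X) (x : X) (i : α) : Bool := decide (x ∈ U i)

/-- The codes of points in the `i`-th member of a cover. The zero code, which codes no point of a
covered space, is added to make these sets a cover of the whole space of codes. -/
def codeCell (i : α) : Set (α → Bool) := {a | a i = true ∨ ∀ j, a j = false}

lemma exists_mem_codeCell [Nonempty α] (a : α → Bool) : ∃ i, a ∈ codeCell i := by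
  by_cases h : ∃ i, a i = true
  · exact h.imp fun i => Or.inl
  · exact ⟨Classical.arbitrary α, Or.inr (by simpa using h)⟩

lemma coverCode_preimage_codeCell {U : α → Set X} (hU : ∀ x, ∃ i, x ∈ U i) (i : α) :
    coverCode U ⁻¹' codeCell i = U i := by
  ext x
  simpa [coverCode, codeCell] using fun h : ∀ j, x ∉ U j => (hU x).elim fun j hj => absurd hj (h j)

lemma measurable_coverCode [MeasurableSpace X] {U : α → Set X} (hU : ∀ i, MeasurableSet (U i)) :
    Measurable (coverCode U) :=
  measurable_pi_iff.2 fun i => measurable_to_bool <| by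
    convert hU i
    ext x
    simp [coverCode]

end CoverCode

section Factor

variable {G X Y α : Type*} [Group G] [MulAction G X] [MulAction G Y] {π : X → Y}

lemma Codebook.preimage_covered (hπG : ∀ (s : G) x, π (s • x) = s • π x) (x : Codebook G α)
    (U : α → Set Y) : π ⁻¹' x.covered U = x.covered fun i => π ⁻¹' U i := by
  ext y
  simp [covered, hπG]

variable [MeasurableSpace X] [MeasurableSpace Y]

lemma entropy_map [Fintype α] [MeasurableSpace α] [MeasurableSingletonClass α] (μ : Measure X)
    (hπ : Measurable π) {f : Y → α} (hf : Measurable f) :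
    entropy (μ.map π) f = entropy μ (f ∘ π) := by
  simp only [entropy, map_measureReal_apply hπ (hf (measurableSet_singleton _)), preimage_comp]

variable [MeasurableConstSMul G Y]

lemma Codebook.Describes.map {μ : Measure X} {x : Codebook G α} {U : α → Set Y} {h δ : ℝ}
    (hπ : Measurable π) (hπG : ∀ (s : G) x, π (s • x) = s • π x) (hU : ∀ i, MeasurableSet (U i))
    (hx : x.Describes μ (fun i => π ⁻¹' U i) h δ) : x.Describes (μ.map π) U h δ where
  log_card_words_le := hx.log_card_words_le
  measureReal_compl_le := by
    rw [map_measureReal_apply hπ (x.measurableSet_covered hU).compl, preimage_compl,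
      x.preimage_covered hπG]
    exact hx.measureReal_compl_le

variable [MeasurableSpace.CountablySeparated Y] [Countable G] [Infinite G] [Fintype α] [Nonempty α]
  [MeasurableSpace α] [MeasurableSingletonClass α]

lemma exists_refinement_of_factor (μ : Measure X) [IsProbabilityMeasure μ]
    [SMulInvariantMeasure G X μ] (hπ : Measurable π) (hπG : ∀ (s : G) x, π (s • x) = s • π x)
    {V : α → Set Y} (hV : ∀ i, MeasurableSet (V i)) (hcov : ∀ y, ∃ i, y ∈ V i) {U : α → Set X}
    (hVU : ∀ i, π ⁻¹' V i = U i) {h : ℝ} (hh : 0 ≤ h)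
    (hx : ∀ ε > 0, ∀ δ > 0,
      ∃ᶠ F in folner G, ∃ x : Codebook G α, x.shape = F ∧ x.Describes μ U (h + ε) δ)
    {η : ℝ} (hη : 0 < η) :
    ∃ p : X → α, Measurable p ∧ (∀ x, x ∈ U (p x)) ∧
      ∀ᶠ F in folner G, entropy μ (orbitWord F p) ≤ (h + η) * #F := by
  obtain rfl : (fun i => π ⁻¹' V i) = U := funext hVU
  have := Measure.isProbabilityMeasure_map (μ := μ) hπ.aemeasurable
  have := smulInvariantMeasure_map (M := G) μ π hπG hπ
  obtain ⟨p, hp, hpU, hent⟩ := exists_refinement_of_countablySeparated (μ.map π) hV hcov hh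
    (fun ε hε δ hδ => (hx ε hε δ hδ).mono fun F ⟨x, hxF, hxd⟩ => ⟨x, hxF, hxd.map hπ hπG hV⟩) hη
  refine ⟨p ∘ π, hp.comp hπ, fun x => hpU (π x), hent.mono fun F hF => ?_⟩
  have hword : orbitWord F p ∘ π = orbitWord F (p ∘ π) := by
    ext x s
    simp [orbitWord, hπG]
  rwa [entropy_map μ hπ (measurable_orbitWord F hp), hword] at hF

variable [MeasurableConstSMul G X]

theorem exists_refinement (μ : Measure X) [IsProbabilityMeasure μ] [SMulInvariantMeasure G X μ]
    {U : α → Set X} (hU : ∀ i, MeasurableSet (U i)) (hcov : ∀ x, ∃ i, x ∈ U i) {h : ℝ}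
    (hh : 0 ≤ h)
    (hx : ∀ ε > 0, ∀ δ > 0,
      ∃ᶠ F in folner G, ∃ x : Codebook G α, x.shape = F ∧ x.Describes μ U (h + ε) δ)
    {η : ℝ} (hη : 0 < η) :
    ∃ p : X → α, Measurable p ∧ (∀ x, x ∈ U (p x)) ∧
      ∀ᶠ F in folner G, entropy μ (orbitWord F p) ≤ (h + η) * #F := by
  refine exists_refinement_of_factor μ (measurable_itinerary (measurable_coverCode hU))
    (itinerary_smul _) (V := fun i => cylinder G (codeCell i))
    (fun i => measurableSet_cylinder .of_discrete)
    (fun y => exists_mem_codeCell (y 1)) (fun i => ?_) hh hx hη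
  rw [itinerary_preimage_cylinder, coverCode_preimage_codeCell hcov]

end Factor

section HPlus

variable {G X : Type*} [Group G] [MulAction G X] [MeasurableSpace X]

lemma HJoin_preimage_singleton (μ : Measure X) {k : ℕ} (p : X → Fin k) (F : Finset G) :
    HJoin μ (fun a => p ⁻¹' {a}) F = entropy μ (orbitWord F p) := by
  have hcell (f : F → Fin k) :
      ⋂ s : F, (fun x => (s : G) • x) ⁻¹' (p ⁻¹' {f s}) = orbitWord F p ⁻¹' {f} := by
    ext x
    simp [orbitWord, funext_iff]
  simp only [HJoin, entropy, hcell, Measure.real]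

lemma isMeasPartition_preimage_singleton {k : ℕ} {p : X → Fin k} (hp : Measurable p) :
    IsMeasPartition fun a => p ⁻¹' {a} :=
  ⟨fun a => hp (measurableSet_singleton a),
    fun _ _ hab => (disjoint_singleton.2 hab).preimage p,
    eq_univ_of_forall fun x => mem_iUnion.2 ⟨p x, rfl⟩⟩

lemma hPlus_le_of_entropy_le (μ : Measure X) [IsProbabilityMeasure μ] {m : ℕ} {U : Fin m → Set X}
    {p : X → Fin m} (hp : Measurable p) (hpU : ∀ x, x ∈ U (p x)) {C : ℝ} (hC : 0 ≤ C)
    (hent : ∀ᶠ F in folner G, entropy μ (orbitWord F p) ≤ C * #F) : hPlus G μ U ≤ C := by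
  refine (hPlus_le μ (isMeasPartition_preimage_singleton hp) fun a => ⟨a, ?_⟩).trans
    (invLimsup_le (HJoin_nonneg μ _) hC (by simpa only [HJoin_preimage_singleton] using hent))
  rintro x rfl
  exact hpU x

end HPlus

end LocalEntropy

theorem stmt6_general {G X : Type*} [Group G] [Countable G] [Infinite G] [MulAction G X]
    [MeasurableSpace X] [MeasurableConstSMul G X] (hG : FolnerAmenable G) (μ : Measure X)
    [IsProbabilityMeasure μ] [SMulInvariantMeasure G X μ] {m : ℕ} {U : Fin m → Set X}
    (hU : ∀ i, MeasurableSet (U i)) (hUcov : (⋃ i, U i) = univ) :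
    hPlus G μ U ≤ hLowerC G μ U := by
  have hcov (x : X) : ∃ i, x ∈ U i := mem_iUnion.1 (hUcov.superset (mem_univ x))
  have : Nonempty (Fin m) := (nonempty_of_isProbabilityMeasure μ).elim fun x => (hcov x).nonempty
  have hh : 0 ≤ hLowerC G μ U := LocalEntropy.hLowerC_nonneg μ
  refine le_of_forall_pos_le_add fun η hη => ?_
  obtain ⟨p, hp, hpU, hent⟩ := LocalEntropy.exists_refinement μ hU hcov hh
    (fun ε hε δ hδ => LocalEntropy.frequently_exists_describes μ hG hUcov hε hδ) hη
  exact LocalEntropy.hPlus_le_of_entropy_le μ hp hpU (by positivity) hent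

/-- Lemma: for a free action of a countably infinite amenable group,
`h_μ⁺(𝒰) ≤ h̲_{c,μ}(𝒰)` for every finite Borel cover `𝒰`. -/
theorem stmt6 {G X : Type*} [Group G] [Countable G] [Infinite G]
    [TopologicalSpace X] [CompactSpace X] [T2Space X]
    [MulAction G X] [ContinuousConstSMul G X] [MeasurableSpace X] [BorelSpace X]
    (hamen : FolnerAmenable G)
    (μ : Measure X) [IsProbabilityMeasure μ] (hinv : InvariantMeasure G μ)
    (hfree : ∀ s : G, s ≠ 1 → μ {x : X | s • x = x} = 0)
    (m : ℕ) (U : Fin m → Set X) (hUmeas : ∀ i, MeasurableSet (U i))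
    (hUcov : (⋃ i, U i) = Set.univ) :
    hPlus G μ U ≤ hLowerC G μ U := by
  have : MeasurableConstSMul G X := ⟨fun s => (continuous_const_smul s).measurable⟩
  have : SMulInvariantMeasure G X μ := ⟨fun s B hB => hinv s B hB⟩
  exact stmt6_general hamen μ hUmeas hUcov
end

section
/- Let μ be a regular Borel probability measure on a compact Hausdorff space X and let C_1,…,C_k be closed subsets of X. Then for every k-element Borel partition 𝒫 = {P_1,…,P_k} of X with P_i ∩ C_i = ∅ for i = 1,…,k and every δ > 0 there is a k-element Borel partition 𝒬 = {Q_1,…,Q_k} of X such that Q_i ∩ C_i = ∅ and μ(∂Q_i) = 0 for i = 1,…,k, and H_μ(𝒬 | 𝒫) < δ. -/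
open MeasureTheory

/-- The conditional entropy `H_μ(𝒬 | 𝒫)` of the finite Borel partition `Q` with respect
to the finite Borel partition `P` (with the convention `0 · ln 0 = 0`, which here is
automatic since the term vanishes when `μ(Q j ∩ P i) = 0`). -/
noncomputable def partCondEntropy {X : Type*} [MeasurableSpace X] (μ : Measure X)
    {k : ℕ} (Q P : Fin k → Set X) : ℝ :=
  ∑ i : Fin k, ∑ j : Fin k,
    -((μ (Q j ∩ P i)).toReal * Real.log ((μ (Q j ∩ P i)).toReal / (μ (P i)).toReal))

/-!
By inner regularity, choose closed sets `K i ⊆ P i` with `μ (P i \ K i)` small. The open sets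
`(C i)ᶜ \ ⋃ j ≠ i, K j` contain the `P i`, so they cover `X`. Shrink this cover to one by closed
sets and separate each closed set from the complement of its open set by a Urysohn function: only
countably many level sets of that function have positive measure, so some sublevel set between the
two has null boundary. Making these sublevel sets disjoint gives a partition `Q` with null
boundaries. Since `Q j` misses `K i` for `j ≠ i`, we get `K i ⊆ Q i`, hence `μ (P i \ Q i)` is
small. As these measures tend to zero, so does the conditional entropy, by continuity of
`t ↦ t log t`.
-/

open Filter Set Topology
open scoped ENNReal

/-- An indexed partition of `X` into measurable sets, some of which may be empty; for the Borel
`σ`-algebra these are the Borel partitions. -/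
structure IsMeasurablePartition {X ι : Type*} [MeasurableSpace X] (P : ι → Set X) : Prop where
  measurableSet : ∀ i, MeasurableSet (P i)
  pairwise_disjoint : Pairwise fun i j => Disjoint (P i) (P j)
  iUnion_eq_univ : ⋃ i, P i = univ

namespace IsMeasurablePartition

variable {X ι κ : Type*} [MeasurableSpace X]

theorem comp_equiv {P : ι → Set X} (hP : IsMeasurablePartition P) (e : κ ≃ ι) :
    IsMeasurablePartition (P ∘ e) where
  measurableSet i := hP.measurableSet (e i)
  pairwise_disjoint := hP.pairwise_disjoint.comp_of_injective e.injective
  iUnion_eq_univ := (e.surjective.iUnion_comp P).trans hP.iUnion_eq_univ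

theorem disjointed [LinearOrder ι] [LocallyFiniteOrderBot ι] {V : ι → Set X}
    (hV : ∀ i, MeasurableSet (V i)) (hcover : ⋃ i, V i = univ) :
    IsMeasurablePartition (disjointed V) where
  measurableSet i := disjointedRec (fun _ j h => h.diff (hV j)) (hV i)
  pairwise_disjoint := disjoint_disjointed V
  iUnion_eq_univ := iUnion_disjointed.trans hcover

end IsMeasurablePartition

theorem subset_of_iUnion_eq_univ_of_disjoint {X ι : Type*} {Q : ι → Set X} {s : Set X} {i : ι}
    (hQ : ⋃ j, Q j = univ) (hs : ∀ j ≠ i, Disjoint (Q j) s) : s ⊆ Q i := by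
  intro x hx
  obtain ⟨j, hj⟩ := iUnion_eq_univ_iff.mp hQ x
  obtain rfl : j = i := by_contra fun hji => disjoint_left.mp (hs j hji) hj hx
  exact hj

section NullFrontier

variable {X ι : Type*} [MeasurableSpace X]

theorem exists_mem_Ioo_measure_preimage_singleton_eq_zero (μ : Measure X) [SFinite μ]
    {f : X → ℝ} (hf : Measurable f) {a b : ℝ} (hab : a < b) : ∃ t ∈ Ioo a b, μ (f ⁻¹' {t}) = 0 := by
  have hcount : {t : ℝ | 0 < μ {x | f x = t}}.Countable := Measure.countable_meas_level_set_pos hf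
  obtain ⟨t, ht, htab⟩ := (hcount.dense_compl ℝ).exists_between hab
  exact ⟨t, htab, nonpos_iff_eq_zero.mp (not_lt.mp ht)⟩

variable [TopologicalSpace X] {μ : Measure X}

theorem null_frontier_sdiff {s t : Set X} (hs : μ (frontier s) = 0) (ht : μ (frontier t) = 0) :
    μ (frontier (s \ t)) = 0 :=
  null_frontier_inter hs ((frontier_compl t).symm ▸ ht)

theorem null_frontier_disjointed [Preorder ι] [LocallyFiniteOrderBot ι] {V : ι → Set X}
    (hV : ∀ i, μ (frontier (V i)) = 0) (i : ι) : μ (frontier (disjointed V i)) = 0 :=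
  disjointedRec (p := fun s => μ (frontier s) = 0) (fun _ j h => null_frontier_sdiff h (hV j))
    (hV i)

variable (μ)

theorem exists_isOpen_between_null_frontier [NormalSpace X] [OpensMeasurableSpace X] [SFinite μ]
    {F U : Set X} (hF : IsClosed F) (hU : IsOpen U) (hFU : F ⊆ U) :
    ∃ V, IsOpen V ∧ F ⊆ V ∧ V ⊆ U ∧ μ (frontier V) = 0 := by
  obtain ⟨f, hf0, hf1, -⟩ := exists_continuous_zero_one_of_isClosed hF hU.isClosed_compl
    (disjoint_compl_right_iff_subset.mpr hFU)
  obtain ⟨t, ⟨ht0, ht1⟩, hnull⟩ :=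
    exists_mem_Ioo_measure_preimage_singleton_eq_zero μ f.continuous.measurable zero_lt_one
  refine ⟨{x | f x < t}, isOpen_lt f.continuous continuous_const, fun x hx => ?_, fun x hx => ?_,
    measure_mono_null (frontier_lt_subset_eq f.continuous continuous_const) hnull⟩
  · exact (hf0 hx).trans_lt ht0
  · by_contra hxU
    exact (hx.trans ht1).ne (hf1 hxU)

theorem exists_isMeasurablePartition_subset_null_frontier [NormalSpace X] [OpensMeasurableSpace X]
    [SFinite μ] [Finite ι] {U : ι → Set X} (hU : ∀ i, IsOpen (U i)) (hcover : ⋃ i, U i = univ) :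
    ∃ Q : ι → Set X, IsMeasurablePartition Q ∧ (∀ i, Q i ⊆ U i) ∧ ∀ i, μ (frontier (Q i)) = 0 := by
  obtain ⟨F, hFcover, hF, hFU⟩ := exists_iUnion_eq_closed_subset hU (fun _ => toFinite _) hcover
  choose V hV hFV hVU hVnull using fun i =>
    exists_isOpen_between_null_frontier μ (hF i) (hU i) (hFU i)
  have hVcover : ⋃ i, V i = univ := univ_subset_iff.mp (hFcover ▸ iUnion_mono hFV)
  obtain ⟨n, ⟨e⟩⟩ := Finite.exists_equiv_fin ι
  let W : Fin n → Set X := V ∘ e.symm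
  have hWcover : ⋃ m, W m = univ := (e.symm.surjective.iUnion_comp V).trans hVcover
  refine ⟨disjointed W ∘ e, ?_, fun i => ?_,
    fun i => null_frontier_disjointed (fun m => hVnull (e.symm m)) (e i)⟩
  · exact (IsMeasurablePartition.disjointed (fun m => (hV (e.symm m)).measurableSet)
      hWcover).comp_equiv e
  · calc disjointed W (e i) ⊆ W (e i) := disjointed_subset W (e i)
      _ = V i := congrArg V (e.symm_apply_apply i)
      _ ⊆ U i := hVU i

theorem IsMeasurablePartition.exists_null_frontier_measure_sdiff_lt [NormalSpace X] [BorelSpace X]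
    [IsFiniteMeasure μ] [μ.WeaklyRegular] [Finite ι] {P U : ι → Set X}
    (hP : IsMeasurablePartition P) (hU : ∀ i, IsOpen (U i)) (hPU : ∀ i, P i ⊆ U i)
    {ε : ℝ≥0∞} (hε : ε ≠ 0) :
    ∃ Q : ι → Set X, IsMeasurablePartition Q ∧ (∀ i, Q i ⊆ U i) ∧
      (∀ i, μ (frontier (Q i)) = 0) ∧ ∀ i, μ (P i \ Q i) < ε := by
  choose K hKP hK hKε using fun i =>
    (hP.measurableSet i).exists_isClosed_sdiff_lt (measure_ne_top μ (P i)) hε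
  let W : ι → Set X := fun i => U i \ ⋃ j ≠ i, K j
  have hW : ∀ i, IsOpen (W i) := fun i =>
    (hU i).sdiff ((toFinite {j | j ≠ i}).isClosed_biUnion fun j _ => hK j)
  have hPW : ∀ i, P i ⊆ W i := fun i => subset_sdiff.mpr ⟨hPU i,
    disjoint_iUnion₂_right.mpr fun j hji => (hP.pairwise_disjoint hji.symm).mono_right (hKP j)⟩
  have hWcover : ⋃ i, W i = univ := univ_subset_iff.mp (hP.iUnion_eq_univ ▸ iUnion_mono hPW)
  obtain ⟨Q, hQ, hQW, hQnull⟩ := exists_isMeasurablePartition_subset_null_frontier μ hW hWcover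
  have hQK : ∀ i, ∀ j ≠ i, Disjoint (Q j) (K i) := fun i j hji =>
    disjoint_sdiff_left.mono (hQW j) (subset_biUnion_of_mem (u := K) hji.symm)
  have hKQ : ∀ i, K i ⊆ Q i := fun i =>
    subset_of_iUnion_eq_univ_of_disjoint hQ.iUnion_eq_univ (hQK i)
  exact ⟨Q, hQ, fun i => (hQW i).trans sdiff_subset, hQnull,
    fun i => (measure_mono (sdiff_subset_sdiff_right (hKQ i))).trans_lt (hKε i)⟩

end NullFrontier

section Entropy

theorem continuous_neg_mul_log_div (p : ℝ) :
    Continuous fun q : ℝ => -(q * Real.log (q / p)) := by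
  rcases eq_or_ne p 0 with rfl | hp
  · simpa using continuous_const
  · have hfun : (fun q : ℝ => -(q * Real.log (q / p))) = fun q => p * Real.negMulLog (q / p) := by
      ext q
      simp only [Real.negMulLog]
      field_simp
    rw [hfun]
    fun_prop

variable {X α : Type*} [MeasurableSpace X] {μ : Measure X} {l : Filter α}

theorem tendsto_measure_inter_of_tendsto_measure_sdiff {s : Set X} {t : α → Set X}
    (h : Tendsto (fun a => μ (s \ t a)) l (𝓝 0)) :
    Tendsto (fun a => μ (t a ∩ s)) l (𝓝 (μ s)) := by
  have hsub : Tendsto (fun a => μ s - μ (s \ t a)) l (𝓝 (μ s)) := by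
    simpa only [tsub_zero] using
      ENNReal.Tendsto.sub (tendsto_const_nhds (x := μ s)) h (.inr ENNReal.zero_ne_top)
  refine tendsto_of_tendsto_of_tendsto_of_le_of_le hsub tendsto_const_nhds (fun a => ?_)
    fun a => measure_mono inter_subset_right
  rw [inter_comm]
  exact tsub_le_iff_right.mpr (measure_le_inter_add_sdiff μ s (t a))

theorem tendsto_measure_inter_zero_of_disjoint {s : Set X} {t u : α → Set X}
    (htu : ∀ a, Disjoint (t a) (u a)) (h : Tendsto (fun a => μ (s \ t a)) l (𝓝 0)) :
    Tendsto (fun a => μ (u a ∩ s)) l (𝓝 0) :=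
  tendsto_of_tendsto_of_tendsto_of_le_of_le tendsto_const_nhds h (fun _ => zero_le)
    fun a => measure_mono fun _ hx => ⟨hx.2, fun hxt => disjoint_left.mp (htu a) hxt hx.1⟩

theorem tendsto_partCondEntropy_zero {k : ℕ} {P : Fin k → Set X} (hP : ∀ i, μ (P i) ≠ ∞)
    {Q : α → Fin k → Set X} (hQ : ∀ a, Pairwise fun i j => Disjoint (Q a i) (Q a j))
    (hPQ : ∀ i, Tendsto (fun a => μ (P i \ Q a i)) l (𝓝 0)) :
    Tendsto (fun a => partCondEntropy μ (Q a) P) l (𝓝 0) := by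
  suffices hterm : ∀ i j, Tendsto (fun a => -((μ (Q a j ∩ P i)).toReal *
      Real.log ((μ (Q a j ∩ P i)).toReal / (μ (P i)).toReal))) l (𝓝 0) by
    simpa only [partCondEntropy, Finset.sum_const_zero] using
      tendsto_finsetSum _ fun i _ => tendsto_finsetSum _ fun j _ => hterm i j
  intro i j
  have hcont := continuous_neg_mul_log_div (μ (P i)).toReal
  rcases eq_or_ne i j with rfl | hij
  · have hself : -((μ (P i)).toReal * Real.log ((μ (P i)).toReal / (μ (P i)).toReal)) = 0 := by
      rcases eq_or_ne (μ (P i)).toReal 0 with h | h <;> simp [h]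
    have hmass := (ENNReal.tendsto_toReal (hP i)).comp
      (tendsto_measure_inter_of_tendsto_measure_sdiff (hPQ i))
    exact (hcont.tendsto' _ 0 hself).comp hmass
  · have hmass := (ENNReal.tendsto_toReal ENNReal.zero_ne_top).comp
      (tendsto_measure_inter_zero_of_disjoint (fun a => hQ a hij) (hPQ i))
    exact (hcont.tendsto' _ 0 (by simp)).comp hmass

end Entropy

theorem stmt7_general {X : Type*} [TopologicalSpace X] [NormalSpace X]
    [MeasurableSpace X] [BorelSpace X] (μ : Measure X) [IsFiniteMeasure μ] [μ.WeaklyRegular]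
    {k : ℕ} {C : Fin k → Set X} (hC : ∀ i, IsClosed (C i))
    {P : Fin k → Set X} (hP : IsMeasurablePartition P) (hPC : ∀ i, P i ∩ C i = ∅)
    {δ : ℝ} (hδ : 0 < δ) :
    ∃ Q : Fin k → Set X, IsMeasurablePartition Q ∧ (∀ i, Q i ∩ C i = ∅) ∧
      (∀ i, μ (frontier (Q i)) = 0) ∧ partCondEntropy μ Q P < δ := by
  choose Q hQ hQC hQnull hPQ using fun n : ℕ =>
    hP.exists_null_frontier_measure_sdiff_lt μ (fun i => (hC i).isOpen_compl)
      (fun i => subset_compl_iff_disjoint_right.mpr (disjoint_iff_inter_eq_empty.mpr (hPC i)))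
      (ENNReal.inv_ne_zero.mpr (ENNReal.natCast_ne_top n))
  have hPQ_tendsto : ∀ i, Tendsto (fun n => μ (P i \ Q n i)) atTop (𝓝 0) := fun i =>
    tendsto_of_tendsto_of_tendsto_of_le_of_le tendsto_const_nhds
      ENNReal.tendsto_inv_nat_nhds_zero (fun _ => zero_le) fun n => (hPQ n i).le
  have hentropy : Tendsto (fun n => partCondEntropy μ (Q n) P) atTop (𝓝 0) :=
    tendsto_partCondEntropy_zero (fun i => measure_ne_top μ (P i))
      (fun n => (hQ n).pairwise_disjoint) hPQ_tendsto
  obtain ⟨n, hn⟩ := (hentropy.eventually_lt_const hδ).exists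
  exact ⟨Q n, hQ n, fun i => disjoint_iff_inter_eq_empty.mp
    (subset_compl_iff_disjoint_right.mp (hQC n i)), hQnull n, hn⟩

/-- Lemma: given closed sets `C i` and a Borel partition `P` with `P i ∩ C i = ∅`, one can
find a Borel partition `Q` with `Q i ∩ C i = ∅`, `μ(∂ Q i) = 0`, and `H_μ(Q | P) < δ`. -/
theorem stmt7 {X : Type*} [TopologicalSpace X] [CompactSpace X] [T2Space X]
    [MeasurableSpace X] [BorelSpace X]
    (μ : Measure X) [IsProbabilityMeasure μ] [μ.Regular]
    (k : ℕ) (C : Fin k → Set X) (hC : ∀ i, IsClosed (C i))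
    (P : Fin k → Set X) (hPmeas : ∀ i, MeasurableSet (P i))
    (hPdisj : Pairwise fun i j => Disjoint (P i) (P j)) (hPcov : (⋃ i, P i) = Set.univ)
    (hPC : ∀ i, P i ∩ C i = ∅) (δ : ℝ) (hδ : 0 < δ) :
    ∃ Q : Fin k → Set X, (∀ i, MeasurableSet (Q i)) ∧
      (Pairwise fun i j => Disjoint (Q i) (Q j)) ∧ (⋃ i, Q i) = Set.univ ∧
      (∀ i, Q i ∩ C i = ∅) ∧ (∀ i, μ (frontier (Q i)) = 0) ∧
      partCondEntropy μ Q P < δ := by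
  obtain ⟨Q, ⟨hQmeas, hQdisj, hQcov⟩, hQ⟩ := stmt7_general μ hC ⟨hPmeas, hPdisj, hPcov⟩ hPC hδ
  exact ⟨Q, hQmeas, hQdisj, hQcov, hQ⟩
end
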